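/- arXiv:1411.5709 — 9 statements merged into one kernel-verified Lean document; each statement's English description precedes it below -/
import Mathlib

section
/- Generalized Braid Lemma: Let E be a finite-dimensional real vector space of dimension ≥ 3, A : E × E × E → E a fully symmetric trilinear map, and J, J', K symmetric bilinear forms on E with J and J' nondegenerate. If J(A(U,V,W),W') + J(A(U,V,W'),W) = K(U,V)·J'(W,W') for all U, V, W, W' ∈ E, then A = 0. -/
/-!
Writing `G` for `J'`, the compatibility relation is solved for `A` as in Koszul's formula for the
Levi-Civita connection:
`2 J(A(U, V, W), X) = K(U, V) G(W, X) + K(U, W) G(V, X) - K(U, X) G(V, W)`.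
Symmetry of `A` in `U, V` then makes the Kulkarni–Nomizu product of `K` and `G` vanish. For `G` of
rank at least three this forces `K = 0`: tested against a triple of vectors and a triple
biorthogonal to it under `G`, the off-diagonal entries of `K` vanish, and any two diagonal entries
are opposite to each other, so all three are zero.
-/

section KulkarniNomizu

variable {R E F : Type*} [CommRing R] [AddCommGroup E] [Module R E] [AddCommGroup F] [Module R F]

/-- The Kulkarni–Nomizu product of two bilinear forms, a curvature-like tensor. It is formed here
for pairings of two possibly different modules, with neither form assumed symmetric. -/
def kulkarniNomizu (L G : E →ₗ[R] F →ₗ[R] R) (u v : E) (w x : F) : R :=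
  L u w * G v x + L v x * G u w - L u x * G v w - L v w * G u x

theorem apply_eq_sub_of_kulkarniNomizu_eq_zero {L G : E →ₗ[R] F →ₗ[R] R} {u v : E} {y : F}
    (hLG : ∀ w, kulkarniNomizu L G u v w y = 0) (hu : G u y = 1) (hv : G v y = 0) (w : F) :
    L v w = L v y * G u w - L u y * G v w := by
  have huv := hLG w
  rw [kulkarniNomizu, hu, hv] at huv
  linear_combination -huv

theorem apply_eq_zero_of_kulkarniNomizu_eq_zero_of_biorthogonal (h2 : IsLeftRegular (2 : R))
    {L G : E →ₗ[R] F →ₗ[R] R} (hLG : ∀ u v w x, kulkarniNomizu L G u v w x = 0)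
    {x : Fin 3 → E} {y : Fin 3 → F} (hxy : ∀ i j, G (x i) (y j) = if i = j then 1 else 0)
    (j : Fin 3) : L (x j) = 0 := by
  have third_index : ∀ i j : Fin 3, ∃ k, k ≠ i ∧ k ≠ j := by decide
  have expand : ∀ i j, i ≠ j → ∀ w,
      L (x j) w = L (x j) (y i) * G (x i) w - L (x i) (y i) * G (x j) w := fun i j hij =>
    apply_eq_sub_of_kulkarniNomizu_eq_zero (fun w => hLG _ _ w _) (by simp [hxy])
      (by simp [hxy, hij.symm])
  have off_diag : ∀ j k, j ≠ k → L (x j) (y k) = 0 := by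
    intro j k hjk
    obtain ⟨i, hij, hik⟩ := third_index j k
    simpa [hxy, hik, hjk] using expand i j hij (y k)
  have diag_neg : ∀ i j, i ≠ j → L (x j) (y j) = -L (x i) (y i) := by
    intro i j hij
    simpa [hxy, hij] using expand i j hij (y j)
  have diag : ∀ j, L (x j) (y j) = 0 := by
    intro j
    obtain ⟨i, hij, -⟩ := third_index j j
    obtain ⟨k, hki, hkj⟩ := third_index i j
    refine h2 ?_
    linear_combination diag_neg i j hij + diag_neg k j hkj - diag_neg k i hki
  obtain ⟨i, hij, -⟩ := third_index j j
  ext w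
  simp [expand i j hij w, off_diag j i hij.symm, diag i]

theorem eq_zero_of_kulkarniNomizu_eq_zero_of_biorthogonal (h2 : IsLeftRegular (2 : R))
    {L G : E →ₗ[R] F →ₗ[R] R} (hLG : ∀ u v w x, kulkarniNomizu L G u v w x = 0)
    {x : Fin 3 → E} {y : Fin 3 → F} (hxy : ∀ i j, G (x i) (y j) = if i = j then 1 else 0) :
    L = 0 := by
  have hLx : ∀ i, L (x i) = 0 :=
    apply_eq_zero_of_kulkarniNomizu_eq_zero_of_biorthogonal h2 hLG hxy
  have expand : ∀ i v w, L v w = L v (y i) * G (x i) w := by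
    intro i v w
    have hi := hLG (x i) v w (y i)
    simp only [kulkarniNomizu, hLx, hxy, LinearMap.zero_apply, if_true] at hi
    linear_combination -hi
  have hLy : ∀ v, L v (y 0) = 0 := fun v => by simpa [hxy] using expand 1 v (y 0)
  ext v w
  simp [expand 0 v w, hLy v]

end KulkarniNomizu

section Biorthogonal

variable {𝕜 E F : Type*} [Field 𝕜] [AddCommGroup E] [Module 𝕜 E] [AddCommGroup F] [Module 𝕜 F]

theorem exists_dual_family_of_linearIndependent {ι : Type*} [Finite ι] [DecidableEq ι]
    {φ : ι → Module.Dual 𝕜 F} (hφ : LinearIndependent 𝕜 φ) :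
    ∃ y : ι → F, ∀ i j, φ i (y j) = if i = j then 1 else 0 := by
  have separate : ∀ j, ∃ y, φ j y ≠ 0 ∧ ∀ i, i ≠ j → φ i y = 0 := by
    intro j
    have hj : ¬⨅ i : ({j}ᶜ : Set ι), LinearMap.ker (φ i) ≤ LinearMap.ker (φ j) := fun hker => by
      have hspan := mem_span_of_iInf_ker_le_ker hker
      rw [← Set.image_eq_range] at hspan
      exact hφ.notMem_span_image (by simp) hspan
    obtain ⟨y, hy, hjy⟩ := SetLike.not_le_iff_exists.mp hj
    exact ⟨y, hjy, by simpa using hy⟩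
  choose y hy hy_ne using separate
  refine ⟨fun j => (φ j (y j))⁻¹ • y j, fun i j => ?_⟩
  split_ifs with hij
  · simp [hij, hy j]
  · simp [hy_ne j i hij]

theorem exists_biorthogonal_of_le_rank {n : ℕ} {G : E →ₗ[𝕜] F →ₗ[𝕜] 𝕜} (hG : n ≤ G.rank) :
    ∃ (x : Fin n → E) (y : Fin n → F), ∀ i j, G (x i) (y j) = if i = j then 1 else 0 := by
  obtain ⟨s, hs, hGs⟩ := LinearMap.le_rank_iff_exists_linearIndependent_finset.mp hG
  let x : Fin n → E := fun i => (s.equivFinOfCardEq hs).symm i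
  have hGx : LinearIndependent 𝕜 fun i => G (x i) := hGs.comp _ (Equiv.injective _)
  exact ⟨x, exists_dual_family_of_linearIndependent hGx⟩

theorem eq_zero_of_kulkarniNomizu_eq_zero [NeZero (2 : 𝕜)] {L G : E →ₗ[𝕜] F →ₗ[𝕜] 𝕜}
    (hG : 3 ≤ G.rank) (hLG : ∀ u v w x, kulkarniNomizu L G u v w x = 0) : L = 0 := by
  obtain ⟨x, y, hxy⟩ := exists_biorthogonal_of_le_rank (n := 3) (by exact_mod_cast hG)
  exact eq_zero_of_kulkarniNomizu_eq_zero_of_biorthogonal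
    (IsRegular.of_ne_zero two_ne_zero).left hLG hxy

end Biorthogonal

section Koszul

variable {R E M : Type*} [CommRing R] [AddCommGroup E] [Module R E] [AddCommGroup M] [Module R M]
  {A : E →ₗ[R] E →ₗ[R] E →ₗ[R] M} {J : M →ₗ[R] E →ₗ[R] R} {K G : E →ₗ[R] E →ₗ[R] R}

theorem two_mul_apply_eq_koszul (hA : ∀ u v w, A u v w = A u w v)
    (h : ∀ u v w x, J (A u v w) x + J (A u v x) w = K u v * G w x) (u v w x : E) :
    2 * J (A u v w) x = K u v * G w x + K u w * G v x - K u x * G v w := by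
  have hv := h u v w x
  have hw := h u w v x
  have hx := h u x v w
  rw [hA u w v] at hw
  rw [hA u x v, hA u x w] at hx
  linear_combination hv + hw - hx

theorem kulkarniNomizu_eq_zero_of_symmetric (hA₁ : ∀ u v w, A u v w = A v u w)
    (hA₂ : ∀ u v w, A u v w = A u w v)
    (h : ∀ u v w x, J (A u v w) x + J (A u v x) w = K u v * G w x) (u v w x : E) :
    kulkarniNomizu K G u v w x = 0 := by
  have huv := two_mul_apply_eq_koszul hA₂ h u v w x
  have hvu := two_mul_apply_eq_koszul hA₂ h v u w x
  have hK : K u v * G w x = K v u * G w x := by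
    rw [← h u v w x, ← h v u w x, hA₁ u v w, hA₁ u v x]
  rw [hA₁ u v w] at huv
  rw [kulkarniNomizu]
  linear_combination hvu - huv - hK

end Koszul

theorem generalized_braid_lemma_general {𝕜 E M : Type*} [Field 𝕜] [NeZero (2 : 𝕜)]
    [AddCommGroup E] [Module 𝕜 E] [AddCommGroup M] [Module 𝕜 M]
    {A : E →ₗ[𝕜] E →ₗ[𝕜] E →ₗ[𝕜] M} (hA₁ : ∀ u v w, A u v w = A v u w)
    (hA₂ : ∀ u v w, A u v w = A u w v)
    {J : M →ₗ[𝕜] E →ₗ[𝕜] 𝕜} (hJ : J.SeparatingLeft)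
    {K G : E →ₗ[𝕜] E →ₗ[𝕜] 𝕜} (hG : 3 ≤ G.rank)
    (h : ∀ u v w x, J (A u v w) x + J (A u v x) w = K u v * G w x) : A = 0 := by
  have hK : K = 0 :=
    eq_zero_of_kulkarniNomizu_eq_zero hG (kulkarniNomizu_eq_zero_of_symmetric hA₁ hA₂ h)
  ext u v w
  refine hJ _ fun x => ?_
  simpa [hK, two_ne_zero] using two_mul_apply_eq_koszul hA₂ h u v w x

/-- **Generalized Braid Lemma.** Let `E` be a finite-dimensional real vector space of
dimension `≥ 3`, `A` a fully symmetric trilinear map `E × E × E → E`, and `J, J', K`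
symmetric bilinear forms on `E` with `J` and `J'` nondegenerate. If
`J(A(U,V,W),W') + J(A(U,V,W'),W) = K(U,V)·J'(W,W')` for all `U,V,W,W'`, then `A = 0`. -/
theorem generalized_braid_lemma
    (E : Type*) [AddCommGroup E] [Module ℝ E] [FiniteDimensional ℝ E]
    (hdim : 3 ≤ Module.finrank ℝ E)
    (A : E →ₗ[ℝ] E →ₗ[ℝ] E →ₗ[ℝ] E)
    (hA₁ : ∀ u v w : E, A u v w = A v u w)
    (hA₂ : ∀ u v w : E, A u v w = A u w v)
    (J J' K : E →ₗ[ℝ] E →ₗ[ℝ] ℝ)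
    (hJsymm : ∀ u v : E, J u v = J v u)
    (hJ'symm : ∀ u v : E, J' u v = J' v u)
    (hKsymm : ∀ u v : E, K u v = K v u)
    (hJnondeg : ∀ u : E, (∀ v : E, J u v = 0) → u = 0)
    (hJ'nondeg : ∀ u : E, (∀ v : E, J' u v = 0) → u = 0)
    (h : ∀ U V W W' : E,
      J (A U V W) W' + J (A U V W') W = K U V * J' W W') :
    A = 0 := by
  have hJ'inj : Function.Injective J' := (injective_iff_map_eq_zero J').mpr fun u hu =>
    hJ'nondeg u (LinearMap.congr_fun hu)
  have hrank : 3 ≤ J'.rank := by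
    rw [LinearMap.rank, rank_range_of_injective J' hJ'inj, ← Module.finrank_eq_rank]
    exact_mod_cast hdim
  exact generalized_braid_lemma_general hA₁ hA₂ hJnondeg hrank h
end

section
/- Let E be a real vector space, A : E × E × E → E a fully symmetric trilinear map, and J, J', K symmetric bilinear forms on E. If J(A(U,V,W),W') + J(A(U,V,W'),W) = K(U,V)·J'(W,W') for all U, V, W, W' ∈ E, then for all U, V, W, W' ∈ E one has K(U,V)·J'(W,W') + K(W,W')·J'(U,V) = K(U,W)·J'(V,W') + K(V,W')·J'(U,W). -/
section SymmetricTernary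

variable {X Y R : Type*} [AddCommSemigroup R] [Mul R]
  {A : X → X → X → Y} {J : Y → X → R} {J' K : X → X → R}

theorem mul_add_mul_eq_sum_pairing
    (hA₁ : ∀ u v w, A u v w = A v u w)
    (hA₂ : ∀ u v w, A u v w = A u w v)
    (h : ∀ u v w x, J (A u v w) x + J (A u v x) w = K u v * J' w x) (u v w x : X) :
    K u v * J' w x + K w x * J' u v =
      J (A u v w) x + J (A u v x) w + J (A u w x) v + J (A v w x) u := by
  have hA_rotate (a b c : X) : A a b c = A c a b := by rw [hA₂, hA₁]
  rw [← h u v w x, ← h w x u v, hA_rotate w x u, hA_rotate w x v, ← add_assoc]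

-- The sum in `mul_add_mul_eq_sum_pairing` is symmetric in `u, v, w, x`, so both sides equal it.
theorem braid_KJprime_identity_general
    (hA₁ : ∀ u v w, A u v w = A v u w)
    (hA₂ : ∀ u v w, A u v w = A u w v)
    (h : ∀ u v w x, J (A u v w) x + J (A u v x) w = K u v * J' w x) (u v w x : X) :
    K u v * J' w x + K w x * J' u v = K u w * J' v x + K v x * J' u w :=
  calc
    K u v * J' w x + K w x * J' u v
    _ = J (A u v w) x + J (A u v x) w + J (A u w x) v + J (A v w x) u :=
      mul_add_mul_eq_sum_pairing hA₁ hA₂ h u v w x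
    _ = J (A u w v) x + J (A u w x) v + J (A u v x) w + J (A w v x) u := by
      rw [hA₂ u v w, hA₁ v w x, add_right_comm (J (A u w v) x)]
    _ = K u w * J' v x + K v x * J' u w :=
      (mul_add_mul_eq_sum_pairing hA₁ hA₂ h u w v x).symm

end SymmetricTernary

/-- If a fully symmetric trilinear map `A` and symmetric bilinear forms `J, J', K`
satisfy `J(A(U,V,W),W') + J(A(U,V,W'),W) = K(U,V)·J'(W,W')`, then
`K(U,V)·J'(W,W') + K(W,W')·J'(U,V) = K(U,W)·J'(V,W') + K(V,W')·J'(U,W)`. -/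
theorem braid_KJprime_identity
    (E : Type*) [AddCommGroup E] [Module ℝ E]
    (A : E →ₗ[ℝ] E →ₗ[ℝ] E →ₗ[ℝ] E)
    (hA₁ : ∀ u v w : E, A u v w = A v u w)
    (hA₂ : ∀ u v w : E, A u v w = A u w v)
    (J J' K : E →ₗ[ℝ] E →ₗ[ℝ] ℝ)
    (hJsymm : ∀ u v : E, J u v = J v u)
    (hJ'symm : ∀ u v : E, J' u v = J' v u)
    (hKsymm : ∀ u v : E, K u v = K v u)
    (h : ∀ U V W W' : E,
      J (A U V W) W' + J (A U V W') W = K U V * J' W W') :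
    ∀ U V W W' : E,
      K U V * J' W W' + K W W' * J' U V = K U W * J' V W' + K V W' * J' U W :=
  braid_KJprime_identity_general (A := fun u v w => A u v w) (J := fun y x => J y x)
    (J' := fun u v => J' u v) (K := fun u v => K u v) hA₁ hA₂ h
end

section
/- Let E be a finite-dimensional real vector space of dimension ≥ 3, J' a nondegenerate symmetric bilinear form on E, and K a symmetric bilinear form on E such that K(u,v) = 0 whenever J'(u,v) = 0. Then there exists α ∈ ℝ such that K = α·J'. -/
/-! The hypothesis says that the kernel of the functional `J' u` lies in the kernel of `K u`, so
`K u` is a multiple of `J' u` for each `u`, a priori with a factor depending on `u`. Linearity makes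
the factor uniform: subtracting from `K` the multiple of `J'` that agrees with it at one vector `u`
with `J' u ≠ 0`, one may assume `K u = 0`. If `J' v = c • J' u`, then `K` vanishes at `v - c • u`
because `J'` does, and so at `v`. Otherwise `K v = K (u + v)` is a multiple of both `J' v` and
`J' u + J' v`, which are linearly independent, so it is zero. -/

open Submodule

section DivisionRing

variable {R V W : Type*} [DivisionRing R] [AddCommGroup V] [Module R V] [AddCommGroup W]
  [Module R W] {f g : V →ₗ[R] W} {u : V}

theorem eq_zero_of_forall_apply_mem_span_singleton (h : ∀ v, g v ∈ span R {f v}) (hfu : f u ≠ 0)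
    (hgu : g u = 0) : g = 0 := by
  ext v
  by_cases hli : LinearIndependent R ![f u, f v]
  · obtain ⟨b, hb⟩ := mem_span_singleton.mp (h v)
    obtain ⟨a, ha⟩ := mem_span_singleton.mp (h (u + v))
    have hcomb : a • f u + (a - b) • f v = 0 := by
      rw [sub_smul, hb, add_sub, ← smul_add, ← map_add, ha, map_add, hgu, zero_add, sub_self]
    obtain ⟨rfl, hab⟩ := LinearIndependent.pair_iff.mp hli _ _ hcomb
    rw [← hb, ← sub_eq_zero.mp hab, zero_smul, LinearMap.zero_apply]
  · obtain ⟨c, hc⟩ : ∃ c : R, c • f u = f v := by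
      simpa only [LinearIndependent.pair_iff' hfu, not_forall, not_not] using hli
    have hf : f (v - c • u) = 0 := by rw [map_sub, map_smul, hc, sub_self]
    have hg : g (v - c • u) = 0 := by
      simpa only [hf, span_zero_singleton, mem_bot] using h (v - c • u)
    simpa only [map_sub, map_smul, hgu, smul_zero, sub_zero, LinearMap.zero_apply] using hg

end DivisionRing

section Field

variable {R V W : Type*} [Field R] [AddCommGroup V] [Module R V] [AddCommGroup W] [Module R W]

theorem exists_eq_smul_of_forall_apply_mem_span_singleton {f g : V →ₗ[R] W}
    (h : ∀ v, g v ∈ span R {f v}) : ∃ a : R, g = a • f := by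
  by_cases hf : ∃ u, f u ≠ 0
  · obtain ⟨u, hfu⟩ := hf
    obtain ⟨a, ha⟩ := mem_span_singleton.mp (h u)
    have hsub : ∀ v, (g - a • f) v ∈ span R {f v} := fun v ↦
      sub_mem (h v) (smul_mem _ a (mem_span_singleton_self _))
    have hsub_u : (g - a • f) u = 0 := sub_eq_zero.mpr ha.symm
    exact ⟨a, sub_eq_zero.mp (eq_zero_of_forall_apply_mem_span_singleton hsub hfu hsub_u)⟩
  · push Not at hf
    refine ⟨0, LinearMap.ext fun v ↦ ?_⟩
    simpa only [hf v, span_zero_singleton, mem_bot, zero_smul, LinearMap.zero_apply] using h v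

theorem mem_span_singleton_of_ker_le_ker {φ ψ : V →ₗ[R] R} (h : φ.ker ≤ ψ.ker) :
    ψ ∈ span R {φ} := by
  simpa only [Set.range_const] using
    mem_span_of_iInf_ker_le_ker (L := fun _ : Unit ↦ φ) (by simpa only [ciInf_const] using h)

theorem proportional_of_vanishing_on_orthogonal_general {B C : V →ₗ[R] W →ₗ[R] R}
    (h : ∀ v w, B v w = 0 → C v w = 0) : ∃ a : R, C = a • B :=
  exists_eq_smul_of_forall_apply_mem_span_singleton fun v ↦
    mem_span_singleton_of_ker_le_ker (h v)

end Field

/-- If `J'` is a nondegenerate symmetric bilinear form on a finite-dimensional real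
vector space of dimension `≥ 3` and `K` is a symmetric bilinear form vanishing on all
`J'`-orthogonal pairs, then `K` is a scalar multiple of `J'`. -/
theorem proportional_of_vanishing_on_orthogonal
    (E : Type*) [AddCommGroup E] [Module ℝ E] [FiniteDimensional ℝ E]
    (hdim : 3 ≤ Module.finrank ℝ E)
    (J' K : E →ₗ[ℝ] E →ₗ[ℝ] ℝ)
    (hJ'symm : ∀ u v : E, J' u v = J' v u)
    (hJ'nondeg : ∀ u : E, (∀ v : E, J' u v = 0) → u = 0)
    (hKsymm : ∀ u v : E, K u v = K v u)
    (h : ∀ u v : E, J' u v = 0 → K u v = 0) :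
    ∃ α : ℝ, ∀ u v : E, K u v = α * J' u v := by
  obtain ⟨α, rfl⟩ := proportional_of_vanishing_on_orthogonal_general h
  exact ⟨α, fun _ _ ↦ rfl⟩
end

section
/- Let E be a finite-dimensional real vector space of dimension ≥ 2, J' a nondegenerate symmetric bilinear form on E, and P : E → E a linear endomorphism that is J'-symmetric (J'(P(u),v) = J'(u,P(v)) for all u,v) and such that every vector w ∈ E with J'(w,w) ≠ 0 satisfies P(w) ∈ ℝ·w. Then P is a scalar multiple of the identity. -/
/-!
Fix an anisotropic vector `x`. If `y ≠ 0` is isotropic, then `t ↦ Q (x + t • y)` is affine and does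
not vanish at `0`, so it has at most one zero. Four scalars thus leave room for `s ≠ t`, both
nonzero, such that `x`, `x + s • y` and `x + t • y` are eigenvectors of `P`. They span three
distinct lines in the plane of `x` and `y`, so `P` is scalar on that plane. Hence every vector,
isotropic or not, is an eigenvector of `P`.
-/

section QuadraticMap

variable {R M N : Type*} [CommRing R] [AddCommGroup M] [Module R M] [AddCommGroup N] [Module R N]
  {Q : QuadraticMap R M N} {x y : M}

theorem quadraticMap_add_smul_of_isotropic (hy : Q y = 0) (t : R) :
    Q (x + t • y) = Q x + t • QuadraticMap.polar Q x y := by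
  rw [QuadraticMap.map_add Q, QuadraticMap.map_smul, hy, smul_zero, add_zero,
    QuadraticMap.polar_smul_right]

theorem subsingleton_isotropic_add_smul [IsDomain R] [Module.IsTorsionFree R N]
    (hx : Q x ≠ 0) (hy : Q y = 0) : {t : R | Q (x + t • y) = 0}.Subsingleton := by
  intro s hs t ht
  rw [Set.mem_ofPred_eq, quadraticMap_add_smul_of_isotropic hy] at hs ht
  have hpolar : QuadraticMap.polar Q x y ≠ 0 := fun h ↦ hx (by simpa [h] using hs)
  exact smul_left_injective R hpolar (add_left_cancel (hs.trans ht.symm))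

end QuadraticMap

section Eigenvectors

variable {K V N : Type*} [Field K] [AddCommGroup V] [Module K V] [AddCommGroup N] [Module K N]
  {Q : QuadraticMap K V N} {P : V →ₗ[K] V} {x y : V}

theorem linearIndependent_pair_of_anisotropic_of_isotropic
    (hx : Q x ≠ 0) (hy : Q y = 0) (hy₀ : y ≠ 0) : LinearIndependent K ![x, y] := by
  rw [LinearIndependent.pair_iff' (ne_zero_of_map hx)]
  rintro a rfl
  have ha : a = 0 := by simpa [QuadraticMap.map_smul, hx] using hy
  exact hy₀ (by rw [ha, zero_smul])

theorem exists_two_anisotropic_add_smul (hK : 4 ≤ ENat.card K)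
    (hx : Q x ≠ 0) (hy : Q y = 0) :
    ∃ s t : K, s ≠ 0 ∧ t ≠ 0 ∧ s ≠ t ∧ Q (x + s • y) ≠ 0 ∧ Q (x + t • y) ≠ 0 := by
  set Z : Set K := {t | Q (x + t • y) = 0}
  have hZ : Z.encard ≤ 1 :=
    Set.encard_le_one_iff_subsingleton.mpr (subsingleton_isotropic_add_smul hx hy)
  have hcompl : 1 < (insert 0 Z)ᶜ.encard := by
    by_contra! h
    have : (4 : ℕ∞) ≤ 3 := calc
      4 ≤ ENat.card K := hK
      _ = (insert 0 Z).encard + (insert 0 Z)ᶜ.encard := by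
        rw [Set.encard_add_encard_compl, Set.encard_univ]
      _ ≤ 1 + 1 + 1 := add_le_add ((Set.encard_insert_le Z 0).trans (by gcongr)) h
      _ = 3 := by norm_num
    exact absurd this (by norm_num)
  obtain ⟨s, t, hs, ht, hst⟩ := Set.one_lt_encard_iff.mp hcompl
  simp only [Set.mem_compl_iff, Set.mem_insert_iff, not_or] at hs ht
  exact ⟨s, t, hs.1, ht.1, hst, hs.2, ht.2⟩

theorem apply_eq_smul_of_three_eigenvectors (hxy : LinearIndependent K ![x, y])
    {s t a b c : K} (hs : s ≠ 0) (ht : t ≠ 0) (hst : s ≠ t) (hx : P x = a • x)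
    (hxs : P (x + s • y) = b • (x + s • y)) (hxt : P (x + t • y) = c • (x + t • y)) :
    P y = a • y := by
  rw [map_add, map_smul, hx] at hxs hxt
  have hcoeff : (t * (b - a)) • x + (t * s * b) • y = (s * (c - a)) • x + (t * s * c) • y := by
    linear_combination (norm := module) s • hxt - t • hxs
  obtain ⟨hx_coeff, hy_coeff⟩ := hxy.eq_of_pair hcoeff
  have hbc : b = c := mul_left_cancel₀ (mul_ne_zero ht hs) hy_coeff
  have hba : b = a := by
    subst hbc
    by_contra h
    exact hst (mul_right_cancel₀ (sub_ne_zero.mpr h) hx_coeff).symm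
  rw [hba, smul_add, add_right_inj, smul_comm a s y] at hxs
  exact smul_right_injective V hs hxs

theorem exists_apply_eq_smul_of_anisotropic_eigenvectors (hK : 4 ≤ ENat.card K) (hQ : Q ≠ 0)
    (hP : ∀ w, Q w ≠ 0 → ∃ c : K, P w = c • w) (v : V) : ∃ c : K, P v = c • v := by
  by_cases hv : Q v = 0
  · rcases eq_or_ne v 0 with rfl | hv₀
    · exact ⟨0, by simp⟩
    obtain ⟨x, hx⟩ : ∃ x, Q x ≠ 0 := DFunLike.ne_iff.mp hQ
    obtain ⟨s, t, hs, ht, hst, hxs, hxt⟩ := exists_two_anisotropic_add_smul hK hx hv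
    obtain ⟨a, ha⟩ := hP x hx
    obtain ⟨b, hb⟩ := hP _ hxs
    obtain ⟨c, hc⟩ := hP _ hxt
    have hxv := linearIndependent_pair_of_anisotropic_of_isotropic hx hv hv₀
    exact ⟨a, apply_eq_smul_of_three_eigenvectors hxv hs ht hst ha hb hc⟩
  · exact hP v hv

theorem homothety_of_anisotropic_eigenvectors_general (hK : 4 ≤ ENat.card K) (hQ : Q ≠ 0)
    (hP : ∀ w, Q w ≠ 0 → ∃ c : K, P w = c • w) : ∃ c : K, P = c • LinearMap.id := by
  refine LinearMap.exists_eq_smul_id_of_forall_notLinearIndependent fun v hv ↦ ?_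
  obtain ⟨c, hc⟩ := exists_apply_eq_smul_of_anisotropic_eigenvectors hK hQ hP v
  exact (LinearIndependent.pair_iff' (hv.ne_zero 0)).mp hv c hc.symm

end Eigenvectors

/-- If `P` is a `J'`-symmetric endomorphism of a finite-dimensional real vector space
of dimension `≥ 2` (with `J'` a nondegenerate symmetric bilinear form) such that every
`J'`-anisotropic vector is an eigenvector of `P`, then `P` is a homothety. -/
theorem homothety_of_anisotropic_eigenvectors
    (E : Type*) [AddCommGroup E] [Module ℝ E] [FiniteDimensional ℝ E]
    (hdim : 2 ≤ Module.finrank ℝ E)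
    (J' : E →ₗ[ℝ] E →ₗ[ℝ] ℝ)
    (hJ'symm : ∀ u v : E, J' u v = J' v u)
    (hJ'nondeg : ∀ u : E, (∀ v : E, J' u v = 0) → u = 0)
    (P : E →ₗ[ℝ] E)
    (hPsymm : ∀ u v : E, J' (P u) v = J' u (P v))
    (hPeig : ∀ w : E, J' w w ≠ 0 → ∃ c : ℝ, P w = c • w) :
    ∃ c : ℝ, P = c • LinearMap.id := by
  have : Nontrivial E := Module.nontrivial_of_finrank_pos (R := ℝ) (by lia)
  have hJ' : J' ≠ 0 := LinearMap.SeparatingLeft.ne_zero hJ'nondeg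
  have hQ : LinearMap.BilinMap.toQuadraticMap J' ≠ 0 :=
    DFunLike.ne_iff.mpr (LinearMap.BilinForm.exists_bilinForm_self_ne_zero hJ' ⟨hJ'symm⟩)
  exact homothety_of_anisotropic_eigenvectors_general (by simp) hQ hPeig
end

section
/- Let E be a finite-dimensional real vector space of dimension ≥ 3, J' a nondegenerate symmetric bilinear form on E, and K a symmetric bilinear form on E satisfying K(U,V)·J'(W,W') + K(W,W')·J'(U,V) = K(U,W)·J'(V,W') + K(V,W')·J'(U,W) for all U, V, W, W' ∈ E. Then K = 0. -/
/-!
Fix `V` and `W'` and read the identity as an equality of bilinear forms in `(U, W)`. The left-hand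
side is a sum of two products of linear functionals, so `J(V, W') • K + K(V, W') • J` has rank at
most two. If `J(V, W') = 0` and `K(V, W') ≠ 0` for some `V` and `W'`, then `J` itself has rank at
most two. Otherwise `K` vanishes wherever `J` does, which forces `K = c • J`, and then
`2 * c * J(V, W') • J` has rank at most two, so `c = 0` as soon as `J` has rank at least three.
-/

section DivisionRing

variable {𝕜 E F : Type*} [DivisionRing 𝕜] [AddCommGroup E] [Module 𝕜 E]
  [AddCommGroup F] [Module 𝕜 F]

theorem rank_smulRight_le_one (f : E →ₗ[𝕜] 𝕜) (x : F) :
    (f.smulRight x).rank ≤ 1 := by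
  have range_le : LinearMap.range (f.smulRight x) ≤ Submodule.span 𝕜 {x} := by
    rintro _ ⟨u, rfl⟩
    exact Submodule.smul_mem _ _ (Submodule.mem_span_singleton_self x)
  calc
    (f.smulRight x).rank ≤ Module.rank 𝕜 (Submodule.span 𝕜 {x}) := Submodule.rank_mono range_le
    _ ≤ Cardinal.mk ({x} : Set F) := rank_span_le _
    _ = 1 := Cardinal.mk_singleton x

theorem rank_smulRight_add_smulRight_le_two (f g : E →ₗ[𝕜] 𝕜) (x y : F) :
    (f.smulRight x + g.smulRight y).rank ≤ 2 :=
  calc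
    (f.smulRight x + g.smulRight y).rank ≤ (f.smulRight x).rank + (g.smulRight y).rank :=
      LinearMap.rank_add_le _ _
    _ ≤ 1 + 1 := add_le_add (rank_smulRight_le_one f x) (rank_smulRight_le_one g y)
    _ = 2 := one_add_one_eq_two

end DivisionRing

section Field

variable {𝕜 E F : Type*} [Field 𝕜] [AddCommGroup E] [Module 𝕜 E] [AddCommGroup F] [Module 𝕜 F]

theorem rank_smul_of_ne_zero (f : E →ₗ[𝕜] F) {c : 𝕜} (hc : c ≠ 0) : (c • f).rank = f.rank := by
  rw [LinearMap.rank, LinearMap.range_smul f c hc]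

theorem eq_zero_of_apply_eq_zero_imp {J K : E →ₗ[𝕜] F →ₗ[𝕜] 𝕜}
    (hJK : ∀ u v, J u v = 0 → K u v = 0) {u₀ : E} {v₀ : F} (hJ : J u₀ v₀ ≠ 0)
    (hK : K u₀ v₀ = 0) : K = 0 := by
  have right_zero (u : E) : K u v₀ = 0 := by
    have := hJK (u - (J u v₀ / J u₀ v₀) • u₀) v₀ (by simp [hJ])
    simpa [hK] using this
  have zero_of_ne (u : E) (hu : J u v₀ ≠ 0) (v : F) : K u v = 0 := by
    have := hJK u (v - (J u v / J u v₀) • v₀) (by simp [hu])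
    simpa [right_zero u] using this
  ext u v
  by_cases hu : J u v₀ = 0
  · have := zero_of_ne (u + u₀) (by simpa [hu] using hJ) v
    simpa [zero_of_ne u₀ hJ v] using this
  · exact zero_of_ne u hu v

theorem exists_eq_smul_of_apply_eq_zero_imp {J K : E →ₗ[𝕜] F →ₗ[𝕜] 𝕜}
    (hJK : ∀ u v, J u v = 0 → K u v = 0) : ∃ c : 𝕜, K = c • J := by
  by_cases hJ : ∀ u v, J u v = 0
  · exact ⟨0, by ext u v; simpa using hJK u v (hJ u v)⟩
  · push Not at hJ
    obtain ⟨u₀, v₀, h₀⟩ := hJ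
    refine ⟨K u₀ v₀ / J u₀ v₀, sub_eq_zero.mp ?_⟩
    refine eq_zero_of_apply_eq_zero_imp (J := J) (fun u v huv ↦ ?_) h₀ ?_
    · simp [huv, hJK u v huv]
    · simp [h₀]

theorem rank_smul_add_smul_le_two {J K : E →ₗ[𝕜] E →ₗ[𝕜] 𝕜} {V W' : E}
    (h : ∀ U W : E, K U V * J W W' + K W W' * J U V = K U W * J V W' + K V W' * J U W) :
    (J V W' • K + K V W' • J).rank ≤ 2 := by
  have eq_add : J V W' • K + K V W' • J =
      (K.flip V).smulRight (J.flip W') + (J.flip V).smulRight (K.flip W') := by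
    ext U W
    simpa [mul_comm] using (h U W).symm
  rw [eq_add]
  exact rank_smulRight_add_smulRight_le_two _ _ _ _

theorem lt_rank_of_separatingLeft {B : E →ₗ[𝕜] F →ₗ[𝕜] 𝕜} (hB : B.SeparatingLeft) {n : ℕ}
    (hn : n < Module.finrank 𝕜 E) : n < B.rank := by
  have injective : Function.Injective B :=
    LinearMap.ker_eq_bot.mp (LinearMap.separatingLeft_iff_ker_eq_bot.mp hB)
  exact Module.lt_rank_of_lt_finrank ((LinearMap.finrank_range_of_inj injective).symm ▸ hn)

theorem K_eq_zero_of_identity_general [NeZero (2 : 𝕜)] {J K : E →ₗ[𝕜] E →ₗ[𝕜] 𝕜}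
    (hJ : 2 < J.rank)
    (h : ∀ U V W W' : E,
      K U V * J W W' + K W W' * J U V = K U W * J V W' + K V W' * J U W) :
    K = 0 := by
  have rank_le (V W' : E) : (J V W' • K + K V W' • J).rank ≤ 2 :=
    rank_smul_add_smul_le_two fun U W ↦ h U V W W'
  have eq_zero_of_rank_smul_le {c : 𝕜} (hc : (c • J).rank ≤ 2) : c = 0 := by
    by_contra hc₀
    exact hJ.not_ge (rank_smul_of_ne_zero J hc₀ ▸ hc)
  have apply_eq_zero (V W' : E) (hV : J V W' = 0) : K V W' = 0 :=
    eq_zero_of_rank_smul_le (by simpa only [hV, zero_smul, zero_add] using rank_le V W')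
  obtain ⟨c, rfl⟩ := exists_eq_smul_of_apply_eq_zero_imp apply_eq_zero
  ext V W'
  have two_mul_eq_zero : 2 * (c * J V W') = 0 := by
    apply eq_zero_of_rank_smul_le
    convert rank_le V W' using 2
    simp only [LinearMap.smul_apply, smul_eq_mul]
    module
  simpa [NeZero.ne (2 : 𝕜)] using two_mul_eq_zero

end Field

/-- If `J'` is a nondegenerate symmetric bilinear form on a finite-dimensional real
vector space of dimension `≥ 3` and `K` is a symmetric bilinear form satisfying
`K(U,V)·J'(W,W') + K(W,W')·J'(U,V) = K(U,W)·J'(V,W') + K(V,W')·J'(U,W)` for all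
`U, V, W, W'`, then `K = 0`. -/
theorem K_eq_zero_of_identity
    (E : Type*) [AddCommGroup E] [Module ℝ E] [FiniteDimensional ℝ E]
    (hdim : 3 ≤ Module.finrank ℝ E)
    (J' K : E →ₗ[ℝ] E →ₗ[ℝ] ℝ)
    (hJ'symm : ∀ u v : E, J' u v = J' v u)
    (hJ'nondeg : ∀ u : E, (∀ v : E, J' u v = 0) → u = 0)
    (hKsymm : ∀ u v : E, K u v = K v u)
    (h : ∀ U V W W' : E,
      K U V * J' W W' + K W W' * J' U V = K U W * J' V W' + K V W' * J' U W) :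
    K = 0 :=
  K_eq_zero_of_identity_general (lt_rank_of_separatingLeft hJ'nondeg hdim) h
end

section
/- Let R : ℝⁿ → ℝⁿ be a linear map of rank ≥ 2. If L : ℝⁿ × ℝⁿ → ℝⁿ is a symmetric bilinear map such that for every x ∈ ℝⁿ the linear map y ↦ L(x,y) is a scalar multiple of R, then L = 0. (Equivalently, the first prolongation of the one-dimensional Lie algebra ℝ·R ⊆ End(ℝⁿ) vanishes.) -/
/-!
If `L x = c x • R` for all `x`, symmetry of `L` says `c x • R y = c y • R x`. When `R x` and `R y`
are linearly independent this forces `c x = 0`; comparing an arbitrary `z` with this `x`, it becomes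
`c z • R x = 0`, hence `c z = 0`.
-/

open Module Submodule

section Semiring

variable {K V W : Type*} [Semiring K] [AddCommMonoid V] [AddCommMonoid W] [Module K V] [Module K W]

theorem exists_linearIndependent_pair_map_of_one_lt_rank {f : V →ₗ[K] W} (hf : 1 < f.rank) :
    ∃ x y, LinearIndependent K ![f x, f y] := by
  have : Nontrivial K := by
    by_contra! _
    exact hf.ne' (rank_subsingleton K f.range)
  have two_le_rank : ((2 : ℕ) : Cardinal) ≤ f.rank := by
    exact_mod_cast Cardinal.two_le_iff_one_lt.mpr hf
  obtain ⟨v, hv⟩ := le_rank_iff.mp two_le_rank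
  obtain ⟨x, hx⟩ := (v 0).2
  obtain ⟨y, hy⟩ := (v 1).2
  refine ⟨x, y, ?_⟩
  convert hv.map_injOn f.range.subtype f.range.subtype_injective.injOn using 1
  ext i
  fin_cases i <;> simp [hx, hy]

theorem eq_zero_of_smul_eq_smul_swap {ι : Type*} {c : ι → K} {f : ι → W}
    (hcf : ∀ i j, c i • f j = c j • f i) {i j : ι} (hij : LinearIndependent K ![f i, f j]) :
    c = 0 := by
  have hi : c i = 0 := (hij.eq_zero_of_pair' (hcf j i)).2
  funext k
  have hk : c k • f i = (0 : K) • f j := by rw [hcf k i, hi, zero_smul, zero_smul]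
  exact (hij.eq_zero_of_pair' hk).1

end Semiring

section CommSemiring

variable {K V W : Type*} [CommSemiring K] [AddCommMonoid V] [AddCommMonoid W]
  [Module K V] [Module K W]

/-- The first prolongation of a space `𝔥` of linear maps: the symmetric bilinear maps all of whose
partial maps lie in `𝔥`. Bilinear maps are encoded in curried form, and source and target of the
maps in `𝔥` may differ. -/
def firstProlongation (𝔥 : Submodule K (V →ₗ[K] W)) : Submodule K (V →ₗ[K] V →ₗ[K] W) where
  carrier := {L | (∀ x y, L x y = L y x) ∧ ∀ x, L x ∈ 𝔥}
  add_mem' hL hM := ⟨fun x y ↦ by simp [hL.1 x y, hM.1 x y], fun x ↦ 𝔥.add_mem (hL.2 x) (hM.2 x)⟩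
  zero_mem' := ⟨fun _ _ ↦ rfl, fun _ ↦ 𝔥.zero_mem⟩
  smul_mem' a _ hL := ⟨fun x y ↦ by simp [hL.1 x y], fun x ↦ 𝔥.smul_mem a (hL.2 x)⟩

theorem first_prolongation_of_line_vanishes_general {R : V →ₗ[K] W} (hR : 1 < R.rank) :
    firstProlongation (K ∙ R) = ⊥ := by
  refine (Submodule.eq_bot_iff _).mpr fun L ⟨hsymm, hL⟩ ↦ ?_
  choose c hc using fun x ↦ mem_span_singleton.mp (hL x)
  have hcR : ∀ x y, c x • R y = c y • R x := fun x y ↦ by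
    simpa only [← hc, LinearMap.smul_apply] using hsymm x y
  obtain ⟨x, y, hxy⟩ := exists_linearIndependent_pair_map_of_one_lt_rank hR
  have hc_zero : c = 0 := eq_zero_of_smul_eq_smul_swap hcR hxy
  ext1 z
  rw [← hc z, hc_zero, Pi.zero_apply, zero_smul, LinearMap.zero_apply]

end CommSemiring

/-- If `R : ℝⁿ → ℝⁿ` is a linear map of rank `≥ 2` and `L` is a symmetric bilinear map
`ℝⁿ × ℝⁿ → ℝⁿ` such that each partial map `y ↦ L(x,y)` is a scalar multiple of `R`,
then `L = 0` (the first prolongation of the line `ℝ·R` vanishes). -/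
theorem first_prolongation_of_line_vanishes
    (n : ℕ) (R : (Fin n → ℝ) →ₗ[ℝ] (Fin n → ℝ))
    (hrank : 2 ≤ Module.finrank ℝ (LinearMap.range R))
    (L : (Fin n → ℝ) →ₗ[ℝ] (Fin n → ℝ) →ₗ[ℝ] (Fin n → ℝ))
    (hLsymm : ∀ x y : Fin n → ℝ, L x y = L y x)
    (hL : ∀ x : Fin n → ℝ, ∃ c : ℝ, L x = c • R) :
    L = 0 := by
  have hmem : L ∈ firstProlongation (ℝ ∙ R) :=
    ⟨hLsymm, fun x ↦ mem_span_singleton.mpr ((hL x).imp fun _ ↦ Eq.symm)⟩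
  rwa [first_prolongation_of_line_vanishes_general (one_lt_rank_of_one_lt_finrank hrank),
    mem_bot] at hmem
end

section
/- Suppose φ(p) = p, Dφ_p = id, D²φ_p = 0, k(p,r) = r for all r ∈ I, and for every r ∈ I and all U, V ∈ ℝⁿ both Δ_{r,U,V}(p) = 0 and the Fréchet derivative of Δ_{r,U,V} at p vanishes. If ∂_r a(p,r) ≠ 0 for every r ∈ I, then D_x k(p,r) = 0 for every r ∈ I. -/
/-- The defect of the isometry equation for a generalized conformal structure given
in coordinates by the family of bilinear forms `a(x,r)`, with candidate isometry `φ`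
and fiber reparameterization `k`:
`Δ_{r,U,V}(x) = a(φ(x), k(x,r))(Dφ_x U, Dφ_x V) − a(x,r)(U,V)`. -/
noncomputable def gcsDelta (n : ℕ)
    (a : (Fin n → ℝ) → ℝ → ((Fin n → ℝ) →L[ℝ] (Fin n → ℝ) →L[ℝ] ℝ))
    (φ : (Fin n → ℝ) → (Fin n → ℝ)) (k : (Fin n → ℝ) → ℝ → ℝ)
    (r : ℝ) (U V : Fin n → ℝ) (x : Fin n → ℝ) : ℝ :=
  a (φ x) (k x r) (fderiv ℝ φ x U) (fderiv ℝ φ x V) - a x r U V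

/-! Because `φ` agrees with the identity to second order at `p`, replacing `x` by `φ(x)` and `U`, `V`
by `Dφ_x U`, `Dφ_x V` changes nothing to first order there. What survives in the derivative of
the isometry defect is the variation of the parameter:
`D(Δ_{r,U,V})_p(W) = (D_x k(p,r) W) • ∂_r a(p,r)(U, V)`. As this vanishes for all `U`, `V`, `W`
and `∂_r a(p,r) ≠ 0`, the scalar `D_x k(p,r) W` is zero. -/

section

variable {𝕜 E F G : Type*} [NontriviallyNormedField 𝕜]
  [NormedAddCommGroup E] [NormedSpace 𝕜 E] [NormedAddCommGroup F] [NormedSpace 𝕜 F]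
  [NormedAddCommGroup G] [NormedSpace 𝕜 G]

theorem hasFDerivAt_clm_apply_apply_of_zero {E₁ E₂ : Type*}
    [NormedAddCommGroup E₁] [NormedSpace 𝕜 E₁] [NormedAddCommGroup E₂] [NormedSpace 𝕜 E₂]
    {b : E → E₁ →L[𝕜] E₂ →L[𝕜] F} {b' : E →L[𝕜] E₁ →L[𝕜] E₂ →L[𝕜] F}
    {u : E → E₁} {v : E → E₂} {p : E}
    (hb : HasFDerivAt b b' p) (hu : HasFDerivAt u (0 : E →L[𝕜] E₁) p)
    (hv : HasFDerivAt v (0 : E →L[𝕜] E₂) p) :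
    HasFDerivAt (fun x => b x (u x) (v x)) ((b'.flip (u p)).flip (v p)) p := by
  simpa using (hb.clm_apply hu).clm_apply hv

/-- The defect `a(φ(x), k(x))(Dφ_x U, Dφ_x V) − a(x, r)(U, V)` of the isometry equation over
normed spaces, for vector-valued bilinear maps and parameters in a normed space `G`. The
parameter `r` is fixed, so the reparameterization `k` is a function of the base point alone. -/
noncomputable def isometryDefect (a : E → G → E →L[𝕜] E →L[𝕜] F) (φ : E → E) (k : E → G)
    (r : G) (U V : E) (x : E) : F :=
  a (φ x) (k x) (fderiv 𝕜 φ x U) (fderiv 𝕜 φ x V) - a x r U V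

variable {φ : E → E} {p : E}

theorem hasFDerivAt_isometryDefect {a : E → G → E →L[𝕜] E →L[𝕜] F} {k : E → G} {r : G}
    {a' : E × G →L[𝕜] E →L[𝕜] E →L[𝕜] F} {k' : E →L[𝕜] G}
    (ha : HasFDerivAt (fun q : E × G => a q.1 q.2) a' (p, r)) (hφp : φ p = p)
    (hφ : HasFDerivAt φ (ContinuousLinearMap.id 𝕜 E) p)
    (hφ' : HasFDerivAt (fderiv 𝕜 φ) (0 : E →L[𝕜] E →L[𝕜] E) p)
    (hkp : k p = r) (hk : HasFDerivAt k k' p) (U V : E) :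
    HasFDerivAt (isometryDefect a φ k r U V)
      ((((a' ∘L .inr 𝕜 E G) ∘L k').flip U).flip V) p := by
  have hDφ (W : E) : HasFDerivAt (fun x => fderiv 𝕜 φ x W) (0 : E →L[𝕜] E) p := by
    simpa using hφ'.clm_apply (hasFDerivAt_const W p)
  have h_moved : HasFDerivAt (fun x => a (φ x) (k x)) (a' ∘L (.prod (.id 𝕜 E) k')) p :=
    .comp p (g := fun q : E × G => a q.1 q.2) (f := fun x => (φ x, k x))
      (by rwa [hφp, hkp]) (hφ.prodMk hk)
  have h_fixed : HasFDerivAt (fun x => a x r) (a' ∘L .inl 𝕜 E G) p :=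
    ha.comp p (g := fun q : E × G => a q.1 q.2) (hasFDerivAt_prodMk_left (𝕜 := 𝕜) p r)
  have h_defect := (hasFDerivAt_clm_apply_apply_of_zero h_moved (hDφ U) (hDφ V)).sub
    (hasFDerivAt_clm_apply_apply_of_zero h_fixed (hasFDerivAt_const U p) (hasFDerivAt_const V p))
  refine h_defect.congr_fderiv (ContinuousLinearMap.ext fun W => ?_)
  have h_split : a' (W, k' W) = a' (W, 0) + a' (0, k' W) := by simp [← map_add]
  simp [hφ.fderiv, h_split]

theorem fderiv_comp_fderiv_eq_zero_of_fderiv_isometryDefect_eq_zero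
    {a : E → G → E →L[𝕜] E →L[𝕜] F} {k : E → G} {r : G}
    (ha : DifferentiableAt 𝕜 (fun q : E × G => a q.1 q.2) (p, r)) (hφp : φ p = p)
    (hφ : HasFDerivAt φ (ContinuousLinearMap.id 𝕜 E) p)
    (hφ' : HasFDerivAt (fderiv 𝕜 φ) (0 : E →L[𝕜] E →L[𝕜] E) p)
    (hkp : k p = r) (hk : DifferentiableAt 𝕜 k p)
    (hΔ' : ∀ U V : E, fderiv 𝕜 (isometryDefect a φ k r U V) p = 0) :
    fderiv 𝕜 (a p) r ∘L fderiv 𝕜 k p = 0 := by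
  have h_partial : fderiv 𝕜 (a p) r =
      fderiv 𝕜 (fun q : E × G => a q.1 q.2) (p, r) ∘L .inr 𝕜 E G :=
    (ha.hasFDerivAt.comp r (g := fun q : E × G => a q.1 q.2)
      (hasFDerivAt_prodMk_right (𝕜 := 𝕜) p r)).fderiv
  ext W U V
  have h_defect := hasFDerivAt_isometryDefect ha.hasFDerivAt hφp hφ hφ' hkp hk.hasFDerivAt U V
  rw [h_partial]
  exact DFunLike.congr_fun (h_defect.fderiv.symm.trans (hΔ' U V)) W

theorem gcs_Dk_eq_zero_general {a : E → 𝕜 → E →L[𝕜] E →L[𝕜] F} {k : E → 𝕜} {r : 𝕜}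
    (ha : DifferentiableAt 𝕜 (fun q : E × 𝕜 => a q.1 q.2) (p, r)) (hφp : φ p = p)
    (hφ : HasFDerivAt φ (ContinuousLinearMap.id 𝕜 E) p)
    (hφ' : HasFDerivAt (fderiv 𝕜 φ) (0 : E →L[𝕜] E →L[𝕜] E) p)
    (hkp : k p = r) (hk : DifferentiableAt 𝕜 k p)
    (hΔ' : ∀ U V : E, fderiv 𝕜 (isometryDefect a φ k r U V) p = 0)
    (ha_r : deriv (a p) r ≠ 0) :
    fderiv 𝕜 k p = 0 := by
  ext W
  have h_comp := DFunLike.congr_fun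
    (fderiv_comp_fderiv_eq_zero_of_fderiv_isometryDefect_eq_zero ha hφp hφ hφ' hkp hk hΔ') W
  have h_smul : fderiv 𝕜 k p W • deriv (a p) r = 0 :=
    (fderiv_eq_smul_deriv (f := a p) _).symm.trans h_comp
  exact (smul_eq_zero.mp h_smul).resolve_right ha_r

end

/-- If `φ` has trivial `2`-jet at `p` (`φ(p) = p`, `Dφ_p = id`, `D²φ_p = 0`),
`k(p,r) = r` on `I`, the isometry defect `Δ_{r,U,V}` vanishes at `p` together with its
first Fréchet derivative, and `∂_r a(p,r) ≠ 0` on `I`, then `D_x k(p,r) = 0` on `I`. -/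
theorem gcs_Dk_eq_zero
    (n : ℕ) (Ω : Set (Fin n → ℝ)) (hΩ : IsOpen Ω)
    (p : Fin n → ℝ) (hp : p ∈ Ω)
    (I : Set ℝ) (hIopen : IsOpen I) (hIconn : I.OrdConnected)
    (a : (Fin n → ℝ) → ℝ → ((Fin n → ℝ) →L[ℝ] (Fin n → ℝ) →L[ℝ] ℝ))
    (ha_smooth : ContDiffOn ℝ (⊤ : ℕ∞) (fun q : (Fin n → ℝ) × ℝ => a q.1 q.2) (Ω ×ˢ I))
    (ha_symm : ∀ x ∈ Ω, ∀ r ∈ I, ∀ U V : Fin n → ℝ, a x r U V = a x r V U)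
    (ha_pos : ∀ x ∈ Ω, ∀ r ∈ I, ∀ U : Fin n → ℝ, U ≠ 0 → 0 < a x r U U)
    (φ : (Fin n → ℝ) → (Fin n → ℝ)) (hφ : ContDiffOn ℝ (⊤ : ℕ∞) φ Ω)
    (k : (Fin n → ℝ) → ℝ → ℝ)
    (hk : ContDiffOn ℝ (⊤ : ℕ∞) (fun q : (Fin n → ℝ) × ℝ => k q.1 q.2) (Ω ×ˢ I))
    (hk_maps : ∀ x ∈ Ω, ∀ r ∈ I, k x r ∈ I)
    (hφp : φ p = p)
    (hDφp : fderiv ℝ φ p = ContinuousLinearMap.id ℝ (Fin n → ℝ))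
    (hD2φp : fderiv ℝ (fderiv ℝ φ) p = 0)
    (hkp : ∀ r ∈ I, k p r = r)
    (hΔ : ∀ r ∈ I, ∀ U V : Fin n → ℝ, gcsDelta n a φ k r U V p = 0)
    (hΔ' : ∀ r ∈ I, ∀ U V : Fin n → ℝ, fderiv ℝ (gcsDelta n a φ k r U V) p = 0)
    (ha_r : ∀ r ∈ I, deriv (fun s => a p s) r ≠ 0) :
    ∀ r ∈ I, fderiv ℝ (fun x => k x r) p = 0 := by
  intro r hr
  have hΩI : Ω ×ˢ I ∈ nhds (p, r) := (hΩ.prod hIopen).mem_nhds ⟨hp, hr⟩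
  have hφ_smooth : ContDiffAt ℝ (⊤ : ℕ∞) φ p := hφ.contDiffAt (hΩ.mem_nhds hp)
  have hDφ : DifferentiableAt ℝ (fderiv ℝ φ) p :=
    (hφ_smooth.fderiv_right (m := 1) (by norm_cast)).differentiableAt one_ne_zero
  have hk_diff : DifferentiableAt ℝ (fun x => k x r) p :=
    ((hk.contDiffAt hΩI).differentiableAt (by simp)).comp p (f := fun x => (x, r))
      (hasFDerivAt_prodMk_left p r).differentiableAt
  exact gcs_Dk_eq_zero_general ((ha_smooth.contDiffAt hΩI).differentiableAt (by simp)) hφp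
    (hDφp ▸ (hφ_smooth.differentiableAt (by simp)).hasFDerivAt) (hD2φp ▸ hDφ.hasFDerivAt)
    (hkp r hr) hk_diff (hΔ' r hr) (ha_r r hr)
end

section
/- Suppose Ψ has trivial 1-jet at (p,r) and that for all U, V ∈ ℝᵐ × ℝ the function Δ_{U,V} vanishes at (p,r) together with its first Fréchet derivative. Then D²φ_{(p,r)} = 0. (A 2-isometry of a lightlike metric with trivial 1-jet has vanishing second derivative of its base component.) -/
/-- The defect of the isometry equation for the lightlike metric
`g_{(x,t)}(U,V) = a(x,t)(U_M, V_M)` on `M × I ⊆ ℝᵐ × ℝ` under a candidate isometry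
`Ψ = (φ, δ)`:
`Δ_{U,V}(v) = a(Ψ(v))(Dφ_v U, Dφ_v V) − a(v)(U_M, V_M)`. -/
noncomputable def lightDelta (m : ℕ)
    (a : (Fin m → ℝ) → ℝ → ((Fin m → ℝ) →L[ℝ] (Fin m → ℝ) →L[ℝ] ℝ))
    (φ : (Fin m → ℝ) × ℝ → (Fin m → ℝ)) (δ : (Fin m → ℝ) × ℝ → ℝ)
    (U V : (Fin m → ℝ) × ℝ) (v : (Fin m → ℝ) × ℝ) : ℝ :=
  a (φ v) (δ v) (fderiv ℝ φ v U) (fderiv ℝ φ v V) - a v.1 v.2 U.1 V.1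

/-!
Differentiate `Δ_{U,V}` at the base point in a direction `W`. Because `Ψ` has trivial 1-jet there,
`a ∘ Ψ` and `a` have the same derivative, and what is left is
`a(D²φ(W,U), V) + a(U, D²φ(W,V)) = 0`. Hence `T(W,U,V) = a(D²φ(W,U), V)` is symmetric in its first
two arguments and skew in its last two, so it is zero, exactly as in the uniqueness proof for the
Levi-Civita connection. Nondegeneracy of `a` on the base then gives `D²φ = 0`.
-/

theorem eq_zero_of_symm_left_of_skew_right {ι R : Type*} [Ring R] [NoZeroDivisors R]
    [NeZero (2 : R)] {T : ι → ι → ι → R} (hsymm : ∀ u v w, T u v w = T v u w)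
    (hskew : ∀ u v w, T u v w = -T u w v) (u v w : ι) : T u v w = 0 := by
  have heq_neg : T u v w = -T u v w :=
    calc T u v w = -T u w v := hskew u v w
      _ = -T w u v := by rw [hsymm u w v]
      _ = T w v u := (hskew w v u).symm
      _ = T v w u := hsymm w v u
      _ = -T v u w := hskew v w u
      _ = -T u v w := by rw [hsymm v u w]
  have htwo : 2 * T u v w = 0 := by rw [two_mul, ← eq_neg_iff_add_eq_zero, ← heq_neg]
  exact (mul_eq_zero.mp htwo).resolve_left two_ne_zero

section PullbackDefect

variable {𝕜 X E : Type*} [NontriviallyNormedField 𝕜]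
  [NormedAddCommGroup X] [NormedSpace 𝕜 X] [NormedAddCommGroup E] [NormedSpace 𝕜 E]

/-- The difference between the pullback under `Ψ : X → X` of the degenerate metric
`(U, V) ↦ a v (π U) (π V)` and that metric itself, evaluated on the constant vector fields `U`, `V`.
The projection `π` replaces `ℝᵐ × ℝ → ℝᵐ`, and `π ∘ Ψ` is the base component `φ`. -/
noncomputable def pullbackDefect (π : X →L[𝕜] E) (a : X → E →L[𝕜] E →L[𝕜] 𝕜) (Ψ : X → X)
    (U V v : X) : 𝕜 :=
  a (Ψ v) (fderiv 𝕜 (π ∘ Ψ) v U) (fderiv 𝕜 (π ∘ Ψ) v V) - a v (π U) (π V)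

variable {π : X →L[𝕜] E} {a : X → E →L[𝕜] E →L[𝕜] 𝕜} {Ψ : X → X} {x : X}

theorem fderiv_pullbackDefect_apply (ha : DifferentiableAt 𝕜 a x) (hΨx : Ψ x = x)
    (hDΨ : HasFDerivAt Ψ (.id 𝕜 X) x) (hφ : DifferentiableAt 𝕜 (fderiv 𝕜 (π ∘ Ψ)) x) (U V W : X) :
    fderiv 𝕜 (pullbackDefect π a Ψ U V) x W =
      a x (fderiv 𝕜 (fderiv 𝕜 (π ∘ Ψ)) x W U) (π V) +
        a x (π U) (fderiv 𝕜 (fderiv 𝕜 (π ∘ Ψ)) x W V) := by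
  have hDφx : fderiv 𝕜 (π ∘ Ψ) x = π := (π.hasFDerivAt.comp x hDΨ).fderiv
  have hDφ (Z : X) := hφ.hasFDerivAt.clm_apply (hasFDerivAt_const Z x)
  have haΨ : HasFDerivAt (a ∘ Ψ) (fderiv 𝕜 a x) x :=
    HasFDerivAt.comp (g := a) x (by rw [hΨx]; exact ha.hasFDerivAt) hDΨ
  have hpullback := (haΨ.clm_apply (hDφ U)).clm_apply (hDφ V)
  have hmetric := (ha.hasFDerivAt.clm_apply (hasFDerivAt_const (π U) x)).clm_apply
    (hasFDerivAt_const (π V) x)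
  have hdefect : HasFDerivAt (pullbackDefect π a Ψ U V) _ x := hpullback.sub hmetric
  rw [hdefect.fderiv]
  simp only [Function.comp_apply, hΨx, hDφx, ContinuousLinearMap.comp_zero, zero_add,
    ContinuousLinearMap.flip_add, add_apply, sub_apply, ContinuousLinearMap.comp_apply,
    ContinuousLinearMap.flip_apply]
  abel

theorem apply_sndFDeriv_eq_zero_of_fderiv_pullbackDefect_eq_zero [NeZero (2 : 𝕜)]
    (ha : DifferentiableAt 𝕜 a x) (ha_symm : ∀ u v, a x u v = a x v u) (hΨx : Ψ x = x)
    (hDΨ : HasFDerivAt Ψ (.id 𝕜 X) x)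
    (hφ : DifferentiableAt 𝕜 (fderiv 𝕜 (π ∘ Ψ)) x) (hφ_symm : IsSymmSndFDerivAt 𝕜 (π ∘ Ψ) x)
    (hΔ : ∀ U V, fderiv 𝕜 (pullbackDefect π a Ψ U V) x = 0) (W U V : X) :
    a x (fderiv 𝕜 (fderiv 𝕜 (π ∘ Ψ)) x W U) (π V) = 0 := by
  refine eq_zero_of_symm_left_of_skew_right
    (T := fun W U V ↦ a x (fderiv 𝕜 (fderiv 𝕜 (π ∘ Ψ)) x W U) (π V))
    (fun W U V ↦ by rw [hφ_symm W U]) (fun W U V ↦ ?_) W U V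
  have hvariation := fderiv_pullbackDefect_apply ha hΨx hDΨ hφ U V W
  rw [hΔ U V, zero_apply, ha_symm (π U)] at hvariation
  exact eq_neg_of_add_eq_zero_left hvariation.symm

theorem lightlike_second_derivative_vanishes_general [NeZero (2 : 𝕜)] {n : WithTop ℕ∞}
    (hn : minSmoothness 𝕜 2 ≤ n) (hπ : Function.Surjective π)
    (ha : DifferentiableAt 𝕜 a x) (ha_symm : ∀ u v, a x u v = a x v u)
    (ha_nondeg : ∀ u, (∀ v, a x u v = 0) → u = 0)
    (hφ : ContDiffAt 𝕜 n (π ∘ Ψ) x) (hΨx : Ψ x = x)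
    (hDΨ : HasFDerivAt Ψ (.id 𝕜 X) x) (hΔ : ∀ U V, fderiv 𝕜 (pullbackDefect π a Ψ U V) x = 0) :
    fderiv 𝕜 (fderiv 𝕜 (π ∘ Ψ)) x = 0 := by
  have hDφ : DifferentiableAt 𝕜 (fderiv 𝕜 (π ∘ Ψ)) x :=
    (hφ.fderiv_right (m := 1) (le_minSmoothness.trans hn)).differentiableAt one_ne_zero
  ext W U
  refine ha_nondeg _ (hπ.forall.mpr fun V ↦ ?_)
  exact apply_sndFDeriv_eq_zero_of_fderiv_pullbackDefect_eq_zero ha ha_symm hΨx hDΨ hDφ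
    (hφ.isSymmSndFDerivAt hn) hΔ W U V

end PullbackDefect

theorem lightDelta_eq_pullbackDefect {m : ℕ}
    (a : (Fin m → ℝ) → ℝ → ((Fin m → ℝ) →L[ℝ] (Fin m → ℝ) →L[ℝ] ℝ))
    (φ : (Fin m → ℝ) × ℝ → (Fin m → ℝ)) (δ : (Fin m → ℝ) × ℝ → ℝ) (U V : (Fin m → ℝ) × ℝ) :
    lightDelta m a φ δ U V =
      pullbackDefect (.fst ℝ (Fin m → ℝ) ℝ) (fun q ↦ a q.1 q.2) (fun v ↦ (φ v, δ v)) U V :=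
  rfl

/-- A `2`-isometry `Ψ = (φ, δ)` of a lightlike metric with trivial `1`-jet at `(p,r)`
has vanishing second derivative of its base component: `D²φ_{(p,r)} = 0`. -/
theorem lightlike_second_derivative_vanishes
    (m : ℕ) (hm : 1 ≤ m) (M : Set (Fin m → ℝ)) (hM : IsOpen M)
    (p : Fin m → ℝ) (hp : p ∈ M)
    (I : Set ℝ) (hIopen : IsOpen I) (hIconn : I.OrdConnected)
    (r : ℝ) (hr : r ∈ I)
    (a : (Fin m → ℝ) → ℝ → ((Fin m → ℝ) →L[ℝ] (Fin m → ℝ) →L[ℝ] ℝ))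
    (ha_smooth : ContDiffOn ℝ (⊤ : ℕ∞) (fun q : (Fin m → ℝ) × ℝ => a q.1 q.2) (M ×ˢ I))
    (ha_symm : ∀ x ∈ M, ∀ t ∈ I, ∀ U V : Fin m → ℝ, a x t U V = a x t V U)
    (ha_pos : ∀ x ∈ M, ∀ t ∈ I, ∀ U : Fin m → ℝ, U ≠ 0 → 0 < a x t U U)
    (φ : (Fin m → ℝ) × ℝ → (Fin m → ℝ)) (δ : (Fin m → ℝ) × ℝ → ℝ)
    (hΨ_smooth : ContDiffOn ℝ (⊤ : ℕ∞) (fun v => (φ v, δ v)) (M ×ˢ I))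
    (hΨ_maps : ∀ v ∈ M ×ˢ I, (φ v, δ v) ∈ M ×ˢ I)
    (hΨp : (φ (p, r), δ (p, r)) = (p, r))
    (hDΨp : fderiv ℝ (fun v => (φ v, δ v)) (p, r)
      = ContinuousLinearMap.id ℝ ((Fin m → ℝ) × ℝ))
    (hΔ : ∀ U V : (Fin m → ℝ) × ℝ, lightDelta m a φ δ U V (p, r) = 0)
    (hΔ' : ∀ U V : (Fin m → ℝ) × ℝ, fderiv ℝ (lightDelta m a φ δ U V) (p, r) = 0) :
    fderiv ℝ (fderiv ℝ φ) (p, r) = 0 := by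
  have hnhds : M ×ˢ I ∈ nhds (p, r) := (hM.prod hIopen).mem_nhds ⟨hp, hr⟩
  have ha : DifferentiableAt ℝ (fun q : (Fin m → ℝ) × ℝ ↦ a q.1 q.2) (p, r) :=
    (ha_smooth.contDiffAt hnhds).differentiableAt (by simp)
  have ha_nondeg (u : Fin m → ℝ) (hu : ∀ v, a p r u v = 0) : u = 0 :=
    by_contra fun hu_ne ↦ (ha_pos p hp r hr u hu_ne).ne' (hu u)
  have hΨ : ContDiffAt ℝ 2 (fun v ↦ (φ v, δ v)) (p, r) :=
    (hΨ_smooth.contDiffAt hnhds).of_le (WithTop.coe_le_coe.mpr le_top)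
  have hΨ_id : HasFDerivAt (fun v ↦ (φ v, δ v)) (.id ℝ ((Fin m → ℝ) × ℝ)) (p, r) :=
    hDΨp ▸ (hΨ.differentiableAt two_ne_zero).hasFDerivAt
  simp only [lightDelta_eq_pullbackDefect] at hΔ'
  exact lightlike_second_derivative_vanishes_general (Ψ := fun v ↦ (φ v, δ v))
    minSmoothness_of_isRCLikeNormedField.le Prod.fst_surjective ha (ha_symm p hp r hr) ha_nondeg
    (contDiffAt_fst.comp _ hΨ) hΨp hΨ_id hΔ'
end

section
/- Sub-rigidity of generic lightlike metrics (local coordinate form of the (3,1) sub-rigidity theorem): Assume m ≥ 3 (so the lightlike manifold M × I has dimension ≥ 4) and that ∂_t a(p,r) is a nondegenerate bilinear form on ℝᵐ (genericity). Suppose Ψ has trivial 1-jet at (p,r) and for all U, V ∈ ℝᵐ × ℝ the function Δ_{U,V} vanishes at (p,r) together with its first and second Fréchet derivatives (Ψ is a 3-isometry at (p,r)). Then Ψ has trivial 2-jet at (p,r): both D²φ_{(p,r)} = 0 and D²δ_{(p,r)} = 0. -/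
/-!
Write `g` for the metric at `(p, r)`. As in the uniqueness of the Levi-Civita connection, the first
derivative of the isometry equation says that `g(D²φ(x,u), v)` is skew in `u, v`; it is symmetric
in `x, u`, so it vanishes. The second derivative then reads
`D²δ(x,y) · ∂ₜa(u,v) + g(D³φ(x,y,u), v) + g(u, D³φ(x,y,v)) = 0`.
A vertical `u` has `g(u, ·) = 0` and `∂ₜa(u, ·) = 0`, so `D³φ`, being fully symmetric, vanishes as
soon as one argument is vertical, and hence so does `D²δ`. On horizontal vectors, the full symmetry
of `D³φ` makes `D²δ(x,y) ∂ₜa(u,v) + D²δ(u,v) ∂ₜa(x,y)` invariant under exchanging `y` and `u`, which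
for a nondegenerate `∂ₜa` in dimension at least three forces `D²δ = 0`.
-/

open scoped Topology

section Algebra

theorem eq_zero_of_symm_of_skew {α R : Type*} [Ring R] [NoZeroDivisors R] [NeZero (2 : R)]
    {F : α → α → α → R} (hsymm : ∀ x y z, F x y z = F y x z)
    (hskew : ∀ x y z, F x y z = -F x z y) (x y z : α) : F x y z = 0 := by
  have hneg : F x y z = -F x y z :=
    calc F x y z = -F x z y := hskew x y z
      _ = -F z x y := by rw [hsymm x z y]
      _ = F z y x := by rw [hskew z x y, neg_neg]
      _ = F y z x := hsymm z y x
      _ = -F y x z := hskew y z x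
      _ = -F x y z := by rw [hsymm y x z]
  have htwo : 2 * F x y z = 0 := by rw [two_mul, add_eq_zero_iff_eq_neg]; exact hneg
  exact (mul_eq_zero.mp htwo).resolve_left two_ne_zero

variable {K V : Type*} [Field K] [AddCommGroup V] [Module K V]

theorem exists_ne_zero_dual_apply_eq_zero (hV : 3 ≤ Module.rank K V) (f g : Module.Dual K V) :
    ∃ v ≠ 0, f v = 0 ∧ g v = 0 := by
  by_contra! hker
  have hinj : Function.Injective (f.prod g) :=
    (injective_iff_map_eq_zero _).mpr fun v hv => by
      by_contra hne
      exact hker v hne (congrArg Prod.fst hv) (congrArg Prod.snd hv)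
  have hrank : Module.rank K V ≤ 2 := by
    simpa [one_add_one_eq_two] using LinearMap.lift_rank_le_of_injective (f.prod g) hinj
  have := hV.trans hrank
  norm_num at this

variable [NeZero (2 : K)]

theorem eq_zero_of_symm_mul_add_mul (hV : 3 ≤ Module.rank K V) {b c : LinearMap.BilinForm K V}
    (hc : c.SeparatingLeft)
    (h : ∀ x y u v, b x y * c u v + b u v * c x y = b x u * c y v + b y v * c x u) :
    b = 0 := by
  have exists_common_null (x : V) :
      ∃ u ≠ 0, ∀ y v, b x y * c u v + b u v * c x y = 0 := by
    obtain ⟨u, hu, hcu, hbu⟩ := exists_ne_zero_dual_apply_eq_zero hV (c x) (b x)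
    exact ⟨u, hu, fun y v => by rw [h, hcu, hbu, zero_mul, mul_zero, add_zero]⟩
  have exists_ne {u : V} (hu : u ≠ 0) : ∃ v, c u v ≠ 0 := not_forall.mp (mt (hc u) hu)
  have orthogonal {x y : V} (hxy : c x y = 0) : b x y = 0 := by
    obtain ⟨u, hu, hxu⟩ := exists_common_null x
    obtain ⟨v, huv⟩ := exists_ne hu
    simpa [hxy, huv] using hxu y v
  have proportional (x u v : V) : b x v * c u v = b u v * c x v := by
    have := orthogonal (x := c u v • x - c x v • u) (y := v) (by simp [mul_comm])
    simp only [map_sub, map_smul, LinearMap.sub_apply, LinearMap.smul_apply, smul_eq_mul] at this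
    linear_combination this
  ext x v
  obtain ⟨u, hu, hxu⟩ := exists_common_null x
  obtain ⟨w, huw⟩ := exists_ne hu
  have vanish {v : V} (huv : c u v ≠ 0) : b x v = 0 := by
    have : 2 * (b x v * c u v) = 0 := by linear_combination hxu v v + proportional x u v
    simpa [huv, two_ne_zero] using this
  by_cases huv : c u v = 0
  · have := vanish (v := v + w) (by simpa [huv] using huw)
    simpa [vanish huw] using this
  · exact vanish huv

theorem eq_zero_of_mul_add_symm_trilinear {F : Type*} [AddCommGroup F] [Module K F]
    (hV : 3 ≤ Module.rank K V) {g c : LinearMap.BilinForm K V} (hg : g.IsSymm)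
    (hg' : g.SeparatingLeft) (hc : c.SeparatingLeft)
    {q : LinearMap.BilinForm K (V × F)} {T : V × F → V × F → V × F → V}
    (hT₁ : ∀ x y z, T x y z = T y x z) (hT₂ : ∀ x y z, T x y z = T x z y)
    (h : ∀ x y u v, q x y * c u.1 v.1 + g (T x y u) v.1 + g u.1 (T x y v) = 0) : q = 0 := by
  have T_vert (x y : V × F) (s : F) : T x y (0, s) = 0 :=
    hg' _ fun v => by simpa using h x y (0, s) (v, 0)
  obtain ⟨u, hu⟩ : ∃ u : V, u ≠ 0 :=
    rank_pos_iff_exists_ne_zero.mp (lt_of_lt_of_le (by norm_num) hV)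
  obtain ⟨v, huv⟩ : ∃ v, c u v ≠ 0 := not_forall.mp (mt (hc u) hu)
  have q_vert_right (x : V × F) (s : F) : q x (0, s) = 0 := by
    simpa [hT₂ _ (0, s), T_vert, huv] using h x (0, s) (u, 0) (v, 0)
  have q_vert_left (s : F) (x : V × F) : q (0, s) x = 0 := by
    simpa [hT₁ (0, s), hT₂ _ (0, s), T_vert, huv] using h (0, s) x (u, 0) (v, 0)
  have q_horiz : q.compl₁₂ (.inl K V F) (.inl K V F) = 0 := by
    refine eq_zero_of_symm_mul_add_mul hV hc fun x y u v => ?_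
    have hT₃ (x y z : V × F) : T x y z = T y z x := by rw [hT₁, hT₂]
    have hxyuv := h (x, 0) (y, 0) (u, 0) (v, 0)
    have huvxy := h (u, 0) (v, 0) (x, 0) (y, 0)
    have hxuyv := h (x, 0) (u, 0) (y, 0) (v, 0)
    have hyvxu := h (y, 0) (v, 0) (x, 0) (u, 0)
    rw [hT₂ _ (u, 0), hT₃ _ (u, 0) (v, 0)] at hxuyv
    rw [← hT₃ (x, 0), hT₃ (y, 0), hT₁ (v, 0)] at hyvxu
    simp only [hg.eq u, hg.eq x, hg.eq y] at hxyuv huvxy hxuyv hyvxu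
    simp only [LinearMap.compl₁₂_apply, LinearMap.inl_apply]
    linear_combination hxyuv + huvxy - hxuyv - hyvxu
  refine LinearMap.BilinForm.ext fun x y => ?_
  calc q x y = q ((x.1, 0) + (0, x.2)) ((y.1, 0) + (0, y.2)) := by simp
    _ = q (x.1, 0) (y.1, 0) := by
        simp only [map_add, LinearMap.add_apply, q_vert_left, q_vert_right, add_zero]
    _ = 0 := LinearMap.congr_fun₂ q_horiz x.1 y.1

end Algebra

section Calculus

variable {𝕜 H E F G : Type*} [NontriviallyNormedField 𝕜]
  [NormedAddCommGroup H] [NormedSpace 𝕜 H] [NormedAddCommGroup E] [NormedSpace 𝕜 E]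
  [NormedAddCommGroup F] [NormedSpace 𝕜 F] [NormedAddCommGroup G] [NormedSpace 𝕜 G] {z : H}

theorem differentiableAt_fderiv_of_contDiffAt {f : H → E} (hf : ContDiffAt 𝕜 2 f z) :
    DifferentiableAt 𝕜 (fderiv 𝕜 f) z :=
  (hf.fderiv_right (m := 1) (by norm_num)).differentiableAt one_ne_zero

theorem eventually_differentiableAt_of_contDiffAt {f : H → E} (hf : ContDiffAt 𝕜 2 f z) :
    ∀ᶠ v in 𝓝 z, DifferentiableAt 𝕜 f v :=
  (hf.eventually (by simp)).mono fun _ hv => hv.differentiableAt two_ne_zero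

theorem fderiv_fderiv_apply_eq_of_eventuallyEq {f f' : H → E} {w : H}
    (hf : DifferentiableAt 𝕜 (fderiv 𝕜 f) z) (hf' : ∀ᶠ v in 𝓝 z, fderiv 𝕜 f v w = f' v) (x : H) :
    fderiv 𝕜 (fderiv 𝕜 f) z x w = fderiv 𝕜 f' z x := by
  rw [← Filter.EventuallyEq.fderiv_eq hf', fderiv_clm_apply hf (differentiableAt_const w)]
  simp

theorem fderiv_fderiv_sub {f g : H → E} (hf : ContDiffAt 𝕜 2 f z) (hg : ContDiffAt 𝕜 2 g z) :
    fderiv 𝕜 (fderiv 𝕜 fun v => f v - g v) z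
      = fderiv 𝕜 (fderiv 𝕜 f) z - fderiv 𝕜 (fderiv 𝕜 g) z := by
  have hsub : fderiv 𝕜 (fun v => f v - g v) =ᶠ[𝓝 z] fun v => fderiv 𝕜 f v - fderiv 𝕜 g v := by
    filter_upwards [eventually_differentiableAt_of_contDiffAt hf,
      eventually_differentiableAt_of_contDiffAt hg] with v hfv hgv
    exact fderiv_fun_sub hfv hgv
  rw [hsub.fderiv_eq, fderiv_fun_sub (differentiableAt_fderiv_of_contDiffAt hf)
    (differentiableAt_fderiv_of_contDiffAt hg)]

theorem fderiv_fderiv_comp {g : E → F} {f : H → E} (hg : ContDiffAt 𝕜 2 g (f z))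
    (hf : ContDiffAt 𝕜 2 f z) (x w : H) :
    fderiv 𝕜 (fderiv 𝕜 fun v => g (f v)) z x w
      = fderiv 𝕜 (fderiv 𝕜 g) (f z) (fderiv 𝕜 f z x) (fderiv 𝕜 f z w)
        + fderiv 𝕜 g (f z) (fderiv 𝕜 (fderiv 𝕜 f) z x w) := by
  have hchain : ∀ᶠ v in 𝓝 z,
      fderiv 𝕜 (fun v => g (f v)) v w = fderiv 𝕜 g (f v) (fderiv 𝕜 f v w) := by
    filter_upwards [eventually_differentiableAt_of_contDiffAt hf,
      hf.continuousAt.eventually (eventually_differentiableAt_of_contDiffAt hg)] with v hfv hgv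
    rw [fderiv_fun_comp v hgv hfv, ContinuousLinearMap.comp_apply]
  have hfz := hf.differentiableAt two_ne_zero
  have hf' := differentiableAt_fderiv_of_contDiffAt hf
  have hg' := differentiableAt_fderiv_of_contDiffAt hg
  rw [fderiv_fderiv_apply_eq_of_eventuallyEq
      (differentiableAt_fderiv_of_contDiffAt (hg.fun_comp z hf)) hchain,
    fderiv_clm_apply (hg'.fun_comp' z hfz) (hf'.clm_apply (differentiableAt_const w)),
    fderiv_fun_comp z hg' hfz, fderiv_clm_apply hf' (differentiableAt_const w)]
  simp [add_comm]

theorem fderiv_fderiv_clm_apply {c : H → E →L[𝕜] F} {u : H → E} (hc : ContDiffAt 𝕜 2 c z)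
    (hu : ContDiffAt 𝕜 2 u z) (x w : H) :
    fderiv 𝕜 (fderiv 𝕜 fun v => c v (u v)) z x w
      = fderiv 𝕜 (fderiv 𝕜 c) z x w (u z) + fderiv 𝕜 c z w (fderiv 𝕜 u z x)
        + fderiv 𝕜 c z x (fderiv 𝕜 u z w) + c z (fderiv 𝕜 (fderiv 𝕜 u) z x w) := by
  have hprod : ∀ᶠ v in 𝓝 z,
      fderiv 𝕜 (fun v => c v (u v)) v w = c v (fderiv 𝕜 u v w) + fderiv 𝕜 c v w (u v) := by
    filter_upwards [eventually_differentiableAt_of_contDiffAt hc,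
      eventually_differentiableAt_of_contDiffAt hu] with v hcv huv
    simp [fderiv_clm_apply hcv huv]
  have hcz := hc.differentiableAt two_ne_zero
  have huz := hu.differentiableAt two_ne_zero
  have hc' := differentiableAt_fderiv_of_contDiffAt hc
  have hu' := differentiableAt_fderiv_of_contDiffAt hu
  have hw := differentiableAt_const (𝕜 := 𝕜) (x := z) w
  rw [fderiv_fderiv_apply_eq_of_eventuallyEq
      (differentiableAt_fderiv_of_contDiffAt (hc.clm_apply hu)) hprod,
    fderiv_fun_add (hcz.clm_apply (hu'.clm_apply hw)) ((hc'.clm_apply hw).clm_apply huz),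
    fderiv_clm_apply hcz (hu'.clm_apply hw), fderiv_clm_apply (hc'.clm_apply hw) huz,
    fderiv_clm_apply hu' hw, fderiv_clm_apply hc' hw]
  simp only [fderiv_fun_const, Pi.zero_apply, ContinuousLinearMap.comp_zero, zero_add, add_apply,
    ContinuousLinearMap.comp_apply, ContinuousLinearMap.flip_apply]
  abel

theorem fderiv_fderiv_clm_apply_const {c : H → E →L[𝕜] F} (hc : ContDiffAt 𝕜 2 c z) (e : E)
    (x w : H) :
    fderiv 𝕜 (fderiv 𝕜 fun v => c v e) z x w = fderiv 𝕜 (fderiv 𝕜 c) z x w e := by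
  simp [fderiv_fderiv_clm_apply hc contDiffAt_const]

theorem fderiv_fderiv_clm_apply₂ {B : H → E →L[𝕜] F →L[𝕜] G} {f : H → E} {g : H → F}
    (hB : ContDiffAt 𝕜 2 B z) (hf : ContDiffAt 𝕜 2 f z) (hg : ContDiffAt 𝕜 2 g z)
    (hfz : fderiv 𝕜 f z = 0) (hgz : fderiv 𝕜 g z = 0) (x w : H) :
    fderiv 𝕜 (fderiv 𝕜 fun v => B v (f v) (g v)) z x w
      = fderiv 𝕜 (fderiv 𝕜 B) z x w (f z) (g z) + B z (fderiv 𝕜 (fderiv 𝕜 f) z x w) (g z)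
        + B z (f z) (fderiv 𝕜 (fderiv 𝕜 g) z x w) := by
  simp [fderiv_fderiv_clm_apply (hB.clm_apply hf) hg, fderiv_fderiv_clm_apply hB hf, hfz, hgz]

theorem fderiv_fderiv_prodMk {f : H → E} {g : H → F} (hf : ContDiffAt 𝕜 2 f z)
    (hg : ContDiffAt 𝕜 2 g z) (x w : H) :
    fderiv 𝕜 (fderiv 𝕜 fun v => (f v, g v)) z x w
      = (fderiv 𝕜 (fderiv 𝕜 f) z x w, fderiv 𝕜 (fderiv 𝕜 g) z x w) := by
  have hprod : ∀ᶠ v in 𝓝 z,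
      fderiv 𝕜 (fun v => (f v, g v)) v w = (fderiv 𝕜 f v w, fderiv 𝕜 g v w) := by
    filter_upwards [eventually_differentiableAt_of_contDiffAt hf,
      eventually_differentiableAt_of_contDiffAt hg] with v hfv hgv
    rw [hfv.fderiv_prodMk hgv, ContinuousLinearMap.prod_apply]
  have hw := differentiableAt_const (𝕜 := 𝕜) (x := z) w
  have hf' := differentiableAt_fderiv_of_contDiffAt hf
  have hg' := differentiableAt_fderiv_of_contDiffAt hg
  rw [fderiv_fderiv_apply_eq_of_eventuallyEq
      (differentiableAt_fderiv_of_contDiffAt (hf.prodMk hg)) hprod,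
    (hf'.clm_apply hw).fderiv_prodMk (hg'.clm_apply hw), fderiv_clm_apply hf' hw,
    fderiv_clm_apply hg' hw]
  simp

theorem deriv_prodMk_right {f : H × 𝕜 → E} {p : H} {r : 𝕜} (hf : DifferentiableAt 𝕜 f (p, r)) :
    deriv (fun t => f (p, t)) r = fderiv 𝕜 f (p, r) (0, 1) :=
  (hf.hasFDerivAt.comp_hasDerivAt r ((hasDerivAt_const r p).prodMk (hasDerivAt_id r))).deriv

variable [IsRCLikeNormedField 𝕜]

theorem fderiv_fderiv_comm {f : H → E} (hf : ContDiffAt 𝕜 2 f z) (x w : H) :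
    fderiv 𝕜 (fderiv 𝕜 f) z x w = fderiv 𝕜 (fderiv 𝕜 f) z w x :=
  (hf.isSymmSndFDerivAt (by simp)).eq x w

theorem fderiv_fderiv_fderiv_right_comm {f : H → E} (hf : ContDiffAt 𝕜 3 f z) (x w u : H) :
    fderiv 𝕜 (fderiv 𝕜 (fderiv 𝕜 f)) z x w u = fderiv 𝕜 (fderiv 𝕜 (fderiv 𝕜 f)) z x u w := by
  have hf' : ContDiffAt 𝕜 2 (fderiv 𝕜 f) z := hf.fderiv_right (by norm_num)
  have key (a b : H) : fderiv 𝕜 (fderiv 𝕜 (fderiv 𝕜 f)) z x a b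
      = fderiv 𝕜 (fun v => fderiv 𝕜 (fderiv 𝕜 f) v a b) z x := by
    have ha := differentiableAt_const (𝕜 := 𝕜) (x := z) a
    have hd := differentiableAt_fderiv_of_contDiffAt hf'
    rw [fderiv_clm_apply (hd.clm_apply ha) (differentiableAt_const b), fderiv_clm_apply hd ha]
    simp
  have hcomm : (fun v => fderiv 𝕜 (fderiv 𝕜 f) v w u) =ᶠ[𝓝 z]
      fun v => fderiv 𝕜 (fderiv 𝕜 f) v u w := by
    filter_upwards [hf.eventually (by simp)] with v hv
    exact fderiv_fderiv_comm (hv.of_le (by norm_num)) w u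
  rw [key, key, hcomm.fderiv_eq]

end Calculus

section Lightlike

set_option maxSynthPendingDepth 3

variable {𝕜 H E : Type*} [NontriviallyNormedField 𝕜]
  [NormedAddCommGroup H] [NormedSpace 𝕜 H] [NormedAddCommGroup E] [NormedSpace 𝕜 E]

/-- The defect of the isometry equation for the lightlike metric `A_v(π U, π V)` on `H`, whose
null directions are the kernel of `π : H → E`, under a map `Ψ : H → H`. The map `φ` stands for
`π ∘ Ψ`; it is kept as a separate argument so that `Ψ = (φ, δ)` yields `lightDelta`. -/
noncomputable def lightlikeDefect (A : H → E →L[𝕜] E →L[𝕜] 𝕜) (π : H →L[𝕜] E) (Ψ : H → H)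
    (φ : H → E) (U V v : H) : 𝕜 :=
  A (Ψ v) (fderiv 𝕜 φ v U) (fderiv 𝕜 φ v V) - A v (π U) (π V)

variable {A : H → E →L[𝕜] E →L[𝕜] 𝕜} {π : H →L[𝕜] E} {Ψ : H → H} {φ : H → E} {z : H}

theorem fderiv_lightlikeDefect (hA : DifferentiableAt 𝕜 A z) (hΨz : Ψ z = z)
    (hΨ : HasFDerivAt Ψ (ContinuousLinearMap.id 𝕜 H) z)
    (hφ : DifferentiableAt 𝕜 (fderiv 𝕜 φ) z) (hφz : fderiv 𝕜 φ z = π) (U V w : H) :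
    fderiv 𝕜 (lightlikeDefect A π Ψ φ U V) z w
      = A z (fderiv 𝕜 (fderiv 𝕜 φ) z w U) (π V) + A z (π U) (fderiv 𝕜 (fderiv 𝕜 φ) z w V) := by
  have hAΨ : HasFDerivAt (fun v => A (Ψ v)) (fderiv 𝕜 A z) z := by
    have hA' : HasFDerivAt A (fderiv 𝕜 A z) (Ψ z) := hΨz.symm ▸ hA.hasFDerivAt
    simpa [Function.comp_def] using hA'.comp z hΨ
  have hφ' (u : H) :
      HasFDerivAt (fun v => fderiv 𝕜 φ v u) ((fderiv 𝕜 (fderiv 𝕜 φ) z).flip u) z := by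
    simpa using hφ.hasFDerivAt.clm_apply (hasFDerivAt_const u z)
  have hpull := (hAΨ.clm_apply (hφ' U)).clm_apply (hφ' V)
  have hbase := (hA.hasFDerivAt.clm_apply (hasFDerivAt_const (π U) z)).clm_apply
    (hasFDerivAt_const (π V) z)
  unfold lightlikeDefect
  rw [(hpull.fun_sub hbase).fderiv]
  simp only [hΨz, hφz, ContinuousLinearMap.flip_add, add_apply, ContinuousLinearMap.comp_zero,
    zero_add, sub_apply, ContinuousLinearMap.comp_apply, ContinuousLinearMap.flip_apply]
  ring

theorem fderiv_fderiv_lightlikeDefect (hA : ContDiffAt 𝕜 2 A z) (hΨz : Ψ z = z)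
    (hΨ : ContDiffAt 𝕜 2 Ψ z) (hΨ' : fderiv 𝕜 Ψ z = ContinuousLinearMap.id 𝕜 H)
    (hφ : ContDiffAt 𝕜 3 φ z) (hφz : fderiv 𝕜 φ z = π) (hφz' : fderiv 𝕜 (fderiv 𝕜 φ) z = 0)
    (U V x w : H) :
    fderiv 𝕜 (fderiv 𝕜 (lightlikeDefect A π Ψ φ U V)) z x w
      = fderiv 𝕜 A z (fderiv 𝕜 (fderiv 𝕜 Ψ) z x w) (π U) (π V)
        + A z (fderiv 𝕜 (fderiv 𝕜 (fderiv 𝕜 φ)) z x w U) (π V)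
        + A z (π U) (fderiv 𝕜 (fderiv 𝕜 (fderiv 𝕜 φ)) z x w V) := by
  have hA' : ContDiffAt 𝕜 2 A (Ψ z) := hΨz.symm ▸ hA
  have hAΨ : ContDiffAt 𝕜 2 (fun v => A (Ψ v)) z := hA'.fun_comp z hΨ
  have hφ' : ContDiffAt 𝕜 2 (fderiv 𝕜 φ) z := hφ.fderiv_right (by norm_num)
  have hφu (u : H) : ContDiffAt 𝕜 2 (fun v => fderiv 𝕜 φ v u) z :=
    hφ'.clm_apply contDiffAt_const
  have hφu' (u : H) : fderiv 𝕜 (fun v => fderiv 𝕜 φ v u) z = 0 := by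
    simp [fderiv_clm_apply (hφ'.differentiableAt two_ne_zero) (differentiableAt_const u), hφz']
  have hpull : fderiv 𝕜 (fderiv 𝕜 fun v => A (Ψ v) (fderiv 𝕜 φ v U) (fderiv 𝕜 φ v V)) z x w
      = fderiv 𝕜 (fderiv 𝕜 A) z x w (π U) (π V)
        + fderiv 𝕜 A z (fderiv 𝕜 (fderiv 𝕜 Ψ) z x w) (π U) (π V)
        + A z (fderiv 𝕜 (fderiv 𝕜 (fderiv 𝕜 φ)) z x w U) (π V)
        + A z (π U) (fderiv 𝕜 (fderiv 𝕜 (fderiv 𝕜 φ)) z x w V) := by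
    simp [fderiv_fderiv_clm_apply₂ hAΨ (hφu U) (hφu V) (hφu' U) (hφu' V),
      fderiv_fderiv_comp hA' hΨ, fderiv_fderiv_clm_apply_const hφ', hΨz, hΨ', hφz]
  have hbase : fderiv 𝕜 (fderiv 𝕜 fun v => A v (π U) (π V)) z x w
      = fderiv 𝕜 (fderiv 𝕜 A) z x w (π U) (π V) := by
    rw [fderiv_fderiv_clm_apply_const (hA.clm_apply contDiffAt_const),
      fderiv_fderiv_clm_apply_const hA]
  have hsub := fderiv_fderiv_sub ((hAΨ.clm_apply (hφu U)).clm_apply (hφu V))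
    ((hA.clm_apply (contDiffAt_const (c := π U))).clm_apply (contDiffAt_const (c := π V)))
  unfold lightlikeDefect
  rw [hsub, sub_apply, sub_apply, hpull, hbase]
  ring

end Lightlike

section Rigidity

variable {𝕜 E : Type*} [RCLike 𝕜] [NormedAddCommGroup E] [NormedSpace 𝕜 E]

theorem fderiv_fderiv_eq_zero_of_fderiv_lightlikeDefect_eq_zero {H : Type*}
    [NormedAddCommGroup H] [NormedSpace 𝕜 H] {A : H → E →L[𝕜] E →L[𝕜] 𝕜} {π : H →L[𝕜] E}
    {Ψ : H → H} {φ : H → E} {z : H} (hπ : Function.Surjective π)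
    (hA : DifferentiableAt 𝕜 A z) (hA_symm : ∀ u v, A z u v = A z v u)
    (hA_nondeg : ∀ u, (∀ v, A z u v = 0) → u = 0) (hΨz : Ψ z = z)
    (hΨ : HasFDerivAt Ψ (ContinuousLinearMap.id 𝕜 H) z)
    (hφ : ContDiffAt 𝕜 2 φ z) (hφz : fderiv 𝕜 φ z = π)
    (hΔ : ∀ U V, fderiv 𝕜 (lightlikeDefect A π Ψ φ U V) z = 0) :
    fderiv 𝕜 (fderiv 𝕜 φ) z = 0 := by
  have hsymm (x y v : H) : A z (fderiv 𝕜 (fderiv 𝕜 φ) z x y) (π v)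
      = A z (fderiv 𝕜 (fderiv 𝕜 φ) z y x) (π v) := by
    rw [fderiv_fderiv_comm hφ]
  have hskew (x y v : H) : A z (fderiv 𝕜 (fderiv 𝕜 φ) z x y) (π v)
      = -A z (fderiv 𝕜 (fderiv 𝕜 φ) z x v) (π y) := by
    rw [hA_symm _ (π y), ← add_eq_zero_iff_eq_neg, ← fderiv_lightlikeDefect hA hΨz hΨ
      (differentiableAt_fderiv_of_contDiffAt hφ) hφz, hΔ, zero_apply]
  ext x y
  refine hA_nondeg _ fun e => ?_
  obtain ⟨v, rfl⟩ := hπ e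
  exact eq_zero_of_symm_of_skew hsymm hskew x y v

theorem lightlike_sub_rigidity_general (hE : 3 ≤ Module.rank 𝕜 E)
    {A : E × 𝕜 → E →L[𝕜] E →L[𝕜] 𝕜} {p : E} {r : 𝕜} (hA : ContDiffAt 𝕜 2 A (p, r))
    (hA_symm : ∀ u v, A (p, r) u v = A (p, r) v u)
    (hA_nondeg : ∀ u, (∀ v, A (p, r) u v = 0) → u = 0)
    (hA_generic : ∀ u, (∀ v, deriv (fun t => A (p, t)) r u v = 0) → u = 0)
    {φ : E × 𝕜 → E} {δ : E × 𝕜 → 𝕜}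
    (hφ : ContDiffAt 𝕜 3 φ (p, r)) (hδ : ContDiffAt 𝕜 2 δ (p, r))
    (hΨp : (φ (p, r), δ (p, r)) = (p, r))
    (hDΨp : fderiv 𝕜 (fun v => (φ v, δ v)) (p, r) = ContinuousLinearMap.id 𝕜 (E × 𝕜))
    (hΔ' : ∀ U V, fderiv 𝕜
      (lightlikeDefect A (.fst 𝕜 E 𝕜) (fun v => (φ v, δ v)) φ U V) (p, r) = 0)
    (hΔ'' : ∀ U V, fderiv 𝕜 (fderiv 𝕜
      (lightlikeDefect A (.fst 𝕜 E 𝕜) (fun v => (φ v, δ v)) φ U V)) (p, r) = 0) :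
    fderiv 𝕜 (fderiv 𝕜 φ) (p, r) = 0 ∧ fderiv 𝕜 (fderiv 𝕜 δ) (p, r) = 0 := by
  have hφ₂ : ContDiffAt 𝕜 2 φ (p, r) := hφ.of_le (by norm_num)
  have hφ₃ : ContDiffAt 𝕜 2 (fderiv 𝕜 φ) (p, r) := hφ.fderiv_right (by norm_num)
  have hφp : fderiv 𝕜 φ (p, r) = .fst 𝕜 E 𝕜 := by
    rw [(hφ₂.differentiableAt two_ne_zero).fderiv_prodMk (hδ.differentiableAt two_ne_zero)] at hDΨp
    exact congrArg (ContinuousLinearMap.fst 𝕜 E 𝕜).comp hDΨp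
  have hΨ := hφ₂.prodMk hδ
  have hD2φ : fderiv 𝕜 (fderiv 𝕜 φ) (p, r) = 0 :=
    fderiv_fderiv_eq_zero_of_fderiv_lightlikeDefect_eq_zero Prod.fst_surjective
      (hA.differentiableAt two_ne_zero) hA_symm hA_nondeg hΨp
      (hDΨp ▸ (hΨ.differentiableAt two_ne_zero).hasFDerivAt) hφ₂ hφp hΔ'
  have hD2Ψ (x w : E × 𝕜) : fderiv 𝕜 (fderiv 𝕜 fun v => (φ v, δ v)) (p, r) x w
      = fderiv 𝕜 (fderiv 𝕜 δ) (p, r) x w • (0, 1) := by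
    rw [fderiv_fderiv_prodMk hφ₂ hδ, hD2φ]
    simp
  refine ⟨hD2φ, ContinuousLinearMap.toLinearMap₁₂_injective ?_⟩
  refine eq_zero_of_mul_add_symm_trilinear hE (g := (A (p, r)).toBilinForm)
    (c := (fderiv 𝕜 A (p, r) (0, 1)).toBilinForm) ⟨hA_symm⟩ hA_nondeg ?_
    (T := fun x y u => fderiv 𝕜 (fderiv 𝕜 (fderiv 𝕜 φ)) (p, r) x y u) ?_
    (fderiv_fderiv_fderiv_right_comm hφ) fun x y u v => ?_
  · rw [← deriv_prodMk_right (hA.differentiableAt two_ne_zero)]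
    exact hA_generic
  · exact fun x y u => by rw [fderiv_fderiv_comm hφ₃]
  · have := fderiv_fderiv_lightlikeDefect hA hΨp hΨ hDΨp hφ hφp hD2φ u v x y
    rw [hΔ'', hD2Ψ, map_smul] at this
    exact this.symm

end Rigidity

/-- **Sub-rigidity of generic lightlike metrics** (local coordinate form of the
`(3,1)` sub-rigidity theorem). For `m ≥ 3` (so the lightlike manifold `M × I` has
dimension `≥ 4`) and a lightlike metric generic at `(p,r)` (`∂_t a(p,r)`
nondegenerate), a `3`-isometry `Ψ = (φ, δ)` with trivial `1`-jet at `(p,r)` has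
trivial `2`-jet at `(p,r)`: `D²φ_{(p,r)} = 0` and `D²δ_{(p,r)} = 0`. -/
theorem lightlike_sub_rigidity
    (m : ℕ) (hm : 3 ≤ m) (M : Set (Fin m → ℝ)) (hM : IsOpen M)
    (p : Fin m → ℝ) (hp : p ∈ M)
    (I : Set ℝ) (hIopen : IsOpen I) (hIconn : I.OrdConnected)
    (r : ℝ) (hr : r ∈ I)
    (a : (Fin m → ℝ) → ℝ → ((Fin m → ℝ) →L[ℝ] (Fin m → ℝ) →L[ℝ] ℝ))
    (ha_smooth : ContDiffOn ℝ (⊤ : ℕ∞) (fun q : (Fin m → ℝ) × ℝ => a q.1 q.2) (M ×ˢ I))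
    (ha_symm : ∀ x ∈ M, ∀ t ∈ I, ∀ U V : Fin m → ℝ, a x t U V = a x t V U)
    (ha_pos : ∀ x ∈ M, ∀ t ∈ I, ∀ U : Fin m → ℝ, U ≠ 0 → 0 < a x t U U)
    (ha_generic : ∀ U : Fin m → ℝ,
      (∀ V : Fin m → ℝ, deriv (fun t => a p t) r U V = 0) → U = 0)
    (φ : (Fin m → ℝ) × ℝ → (Fin m → ℝ)) (δ : (Fin m → ℝ) × ℝ → ℝ)
    (hΨ_smooth : ContDiffOn ℝ (⊤ : ℕ∞) (fun v => (φ v, δ v)) (M ×ˢ I))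
    (hΨ_maps : ∀ v ∈ M ×ˢ I, (φ v, δ v) ∈ M ×ˢ I)
    (hΨp : (φ (p, r), δ (p, r)) = (p, r))
    (hDΨp : fderiv ℝ (fun v => (φ v, δ v)) (p, r)
      = ContinuousLinearMap.id ℝ ((Fin m → ℝ) × ℝ))
    (hΔ : ∀ U V : (Fin m → ℝ) × ℝ, lightDelta m a φ δ U V (p, r) = 0)
    (hΔ' : ∀ U V : (Fin m → ℝ) × ℝ, fderiv ℝ (lightDelta m a φ δ U V) (p, r) = 0)
    (hΔ'' : ∀ U V : (Fin m → ℝ) × ℝ,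
      fderiv ℝ (fderiv ℝ (lightDelta m a φ δ U V)) (p, r) = 0) :
    fderiv ℝ (fderiv ℝ φ) (p, r) = 0 ∧ fderiv ℝ (fderiv ℝ δ) (p, r) = 0 := by
  have hz : M ×ˢ I ∈ 𝓝 (p, r) := (hM.prod hIopen).mem_nhds ⟨hp, hr⟩
  have hΨ : ContDiffAt ℝ 3 (fun v => (φ v, δ v)) (p, r) :=
    contDiffAt_infty.mp (hΨ_smooth.contDiffAt hz) 3
  exact lightlike_sub_rigidity_general (by simpa using hm)
    (contDiffAt_infty.mp (ha_smooth.contDiffAt hz) 2) (ha_symm p hp r hr)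
    (fun u hu => by_contra fun hne => (ha_pos p hp r hr u hne).ne' (hu u)) ha_generic
    hΨ.fst (hΨ.snd.of_le (by norm_num)) hΨp hDΨp hΔ' hΔ''
end
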